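/- Let q ≤ k and k+p ≤ n be positive integers, set m = p+q−1, and let w ∈ Sₙ. Then in Hₙ, 𝔖_w · 𝔖_{h[k;p,q]} = Σ_γ 𝔖_{end(γ)}, the sum (with multiplicity) over all paths γ: w = w⁽⁰⁾, w⁽¹⁾, …, w⁽ᵐ⁾ of length m in the k-Bruhat order starting at w whose labels satisfy w⁽¹⁾(a₁) < ⋯ < w⁽ᵖ⁾(a_p) and w⁽ᵖ⁾(a_p) > w⁽ᵖ⁺¹⁾(a_{p+1}) > ⋯ > w⁽ᵐ⁾(a_m), where end(γ) = w⁽ᵐ⁾. The same identity holds with the sum instead taken over all such paths whose labels satisfy w⁽¹⁾(a₁) > ⋯ > w⁽q⁾(a_q) and w⁽q⁾(a_q) < ⋯ < w⁽ᵐ⁾(a_m). -/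

import Mathlib

open Equiv MvPolynomial

attribute [local instance] Classical.propDecidable

namespace SchubertPieri

/-- Position `j ∈ {1,…,N}` (1-indexed) as an element of `Fin N` (0-indexed). -/
def pos (N : ℕ) [NeZero N] (j : ℕ) : Fin N :=
  ⟨(j - 1) % N, Nat.mod_lt _ (Nat.pos_of_ne_zero (NeZero.ne N))⟩

/-- The transposition `t_{a,b}` interchanging positions `a` and `b` (1-indexed). -/
def t (N : ℕ) [NeZero N] (a b : ℕ) : Equiv.Perm (Fin N) :=
  Equiv.swap (pos N a) (pos N b)

/-- The value `w(j)` for `j ∈ {1,…,N}` (1-indexed). -/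
def val {N : ℕ} [NeZero N] (w : Equiv.Perm (Fin N)) (j : ℕ) : ℕ :=
  (w (pos N j) : ℕ) + 1

/-- The length of `w`: its number of inversions. -/
def len {N : ℕ} (w : Equiv.Perm (Fin N)) : ℕ :=
  (Finset.univ.filter fun p : Fin N × Fin N => p.1 < p.2 ∧ w p.2 < w p.1).card

/-- The longest permutation `w₀ : j ↦ N+1-j`. -/
def w0 (N : ℕ) : Equiv.Perm (Fin N) :=
  ⟨Fin.rev, Fin.rev, Fin.rev_rev, Fin.rev_rev⟩

/-- The product `t_{a 0, b 0} ⋯ t_{a (i-1), b (i-1)}`. -/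
def tProd (N : ℕ) [NeZero N] (a b : ℕ → ℕ) (i : ℕ) : Equiv.Perm (Fin N) :=
  ((List.range i).map fun j => t N (a j) (b j)).prod

/-- `r[k,m] = t_{k,k+1} t_{k,k+2} ⋯ t_{k,k+m}`, the (m+1)-cycle with
`r[k,m](k) = k+m` and `r[k,m](j) = j-1` for `k+1 ≤ j ≤ k+m`. -/
def rPerm (N k m : ℕ) [NeZero N] : Equiv.Perm (Fin N) :=
  ((List.range m).map fun i => t N k (k + 1 + i)).prod

/-- `c[k,m] = t_{k,k+1} t_{k-1,k+1} ⋯ t_{k-m+1,k+1}`, the (m+1)-cycle with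
`c[k,m](j) = j+1` for `k-m+1 ≤ j ≤ k` and `c[k,m](k+1) = k-m+1`. -/
def cPerm (N k m : ℕ) [NeZero N] : Equiv.Perm (Fin N) :=
  ((List.range m).map fun i => t N (k - i) (k + 1)).prod

/-- The conditions that `aᵢ ≤ k < bᵢ` (with all indices in `{1,…,N}`) and that
`ℓ(w t_{a₁ b₁} ⋯ t_{aᵢ bᵢ}) = ℓ(w) + i` for `1 ≤ i ≤ m`. -/
def StepOK (N k m : ℕ) [NeZero N] (w : Equiv.Perm (Fin N)) (a b : ℕ → ℕ) : Prop :=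
  (∀ i, i < m → 1 ≤ a i ∧ a i ≤ k ∧ k < b i ∧ b i ≤ N) ∧
  (∀ i, i ≤ m → len (w * tProd N a b i) = len w + i)

/-- `w →_{r[k,m]} w'`. -/
def RelR (N k m : ℕ) [NeZero N] (w w' : Equiv.Perm (Fin N)) : Prop :=
  ∃ a b : ℕ → ℕ, StepOK N k m w a b ∧ w' = w * tProd N a b m ∧
    (∀ i j, i < m → j < m → i ≠ j → b i ≠ b j)

/-- `w →_{c[k,m]} w'`. -/
def RelC (N k m : ℕ) [NeZero N] (w w' : Equiv.Perm (Fin N)) : Prop :=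
  ∃ a b : ℕ → ℕ, StepOK N k m w a b ∧ w' = w * tProd N a b m ∧
    (∀ i j, i < m → j < m → i ≠ j → a i ≠ a j)

/-- The divided difference operator `∂ᵢ f = (f - sᵢ·f)/(xᵢ - xᵢ₊₁)` (1-indexed `i`);
the quotient is exact, and is recovered here as the (unique) witness of divisibility. -/
noncomputable def divDiff {N : ℕ} [NeZero N] (i : ℕ) (f : MvPolynomial (Fin N) ℤ) :
    MvPolynomial (Fin N) ℤ :=
  if h : (X (pos N i) - X (pos N (i + 1))) ∣ (f - rename (⇑(t N i (i + 1))) f) then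
    h.choose
  else 0

/-- `∂_{a₁} ∘ ⋯ ∘ ∂_{a_p}` applied to `f`, for a word `l = [a₁,…,a_p]`. -/
noncomputable def divDiffWord {N : ℕ} [NeZero N] (l : List ℕ) (f : MvPolynomial (Fin N) ℤ) :
    MvPolynomial (Fin N) ℤ :=
  l.foldr divDiff f

/-- Auxiliary: produce a reduced word for `w` by repeatedly removing a descent. -/
def redWordAux (N : ℕ) [NeZero N] : ℕ → Equiv.Perm (Fin N) → List ℕ
  | 0, _ => []
  | fuel + 1, w =>
    match ((List.range (N - 1)).map (· + 1)).find? (fun i => decide (val w (i + 1) < val w i)) with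
    | none => []
    | some i => redWordAux N fuel (w * t N i (i + 1)) ++ [i]

/-- A canonical reduced word `(a₁,…,a_p)` for `w`, i.e. `w = s_{a₁} ⋯ s_{a_p}` with `p = ℓ(w)`. -/
def redWord (N : ℕ) [NeZero N] (w : Equiv.Perm (Fin N)) : List ℕ :=
  redWordAux N (N * N) w

/-- The staircase monomial `x₁^{N-1} x₂^{N-2} ⋯ x_{N-1}`. -/
noncomputable def staircase (N : ℕ) : MvPolynomial (Fin N) ℤ :=
  ∏ i : Fin N, X i ^ (N - 1 - (i : ℕ))

/-- The Schubert polynomial `𝔖_w = ∂_{w⁻¹w₀}(x₁^{N-1} ⋯ x_{N-1})`. -/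
noncomputable def schubertPoly (N : ℕ) [NeZero N] (w : Equiv.Perm (Fin N)) :
    MvPolynomial (Fin N) ℤ :=
  divDiffWord (redWord N (w⁻¹ * w0 N)) (staircase N)

/-- The ideal of `Rₙ` generated by the symmetric polynomials with zero constant term. -/
noncomputable def symIdeal (N : ℕ) : Ideal (MvPolynomial (Fin N) ℤ) :=
  Ideal.span {f : MvPolynomial (Fin N) ℤ | f.IsSymmetric ∧ constantCoeff f = 0}

/-- The ring `Hₙ = Rₙ/𝒮`. -/
abbrev HRing (N : ℕ) := MvPolynomial (Fin N) ℤ ⧸ symIdeal N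

/-- The class of the Schubert polynomial `𝔖_w` in `Hₙ`. -/
noncomputable def SS (N : ℕ) [NeZero N] (w : Equiv.Perm (Fin N)) : HRing N :=
  Ideal.Quotient.mk (symIdeal N) (schubertPoly N w)

/-- The complete homogeneous symmetric polynomial of degree `m` in `x₁,…,x_k`. -/
noncomputable def hPoly (N k m : ℕ) : MvPolynomial (Fin N) ℤ :=
  ∑ s ∈ (Finset.univ.filter fun i : Fin N => (i : ℕ) < k).sym m,
    (Multiset.map X (s : Multiset (Fin N))).prod

/-- The elementary symmetric polynomial of degree `m` in `x₁,…,x_k`. -/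
noncomputable def ePoly (N k m : ℕ) : MvPolynomial (Fin N) ℤ :=
  ∑ s ∈ (Finset.univ.filter fun i : Fin N => (i : ℕ) < k).powersetCard m, ∏ i ∈ s, X i

/-- Covering relation of the `k`-Bruhat order. -/
def kCover (N k : ℕ) [NeZero N] (w w' : Equiv.Perm (Fin N)) : Prop :=
  ∃ a b : ℕ, 1 ≤ a ∧ a ≤ k ∧ k < b ∧ b ≤ N ∧ w' = w * t N a b ∧ len w' = len w + 1

/-- The (strict) `k`-Bruhat order `<ₖ`. -/
def kBruhat (N k : ℕ) [NeZero N] : Equiv.Perm (Fin N) → Equiv.Perm (Fin N) → Prop :=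
  Relation.TransGen (kCover N k)

/-- The label `w⁽ⁱ⁺¹⁾(a_{i+1})` (0-indexed `i`) of the `(i+1)`-st step of a path. -/
def label {N : ℕ} [NeZero N] (w : Equiv.Perm (Fin N)) (a b : ℕ → ℕ) (i : ℕ) : ℕ :=
  val (w * tProd N a b (i + 1)) (a i)

/-- `(a,b)` encodes a path of length `m` in the `k`-Bruhat order from `w` to `w'`
(normalized so that `a i = b i = 0` for `i ≥ m`, making the encoding unique). -/
def PathWit (N k m : ℕ) [NeZero N] (w w' : Equiv.Perm (Fin N))
    (ab : (ℕ → ℕ) × (ℕ → ℕ)) : Prop :=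
  StepOK N k m w ab.1 ab.2 ∧ w' = w * tProd N ab.1 ab.2 m ∧
    ∀ i, m ≤ i → ab.1 i = 0 ∧ ab.2 i = 0

/-- Paths of length `m` in the `k`-Bruhat order from `w` to `w'` with strictly
increasing labels. -/
def IncPaths (N k m : ℕ) [NeZero N] (w w' : Equiv.Perm (Fin N)) :
    Set ((ℕ → ℕ) × (ℕ → ℕ)) :=
  {ab | PathWit N k m w w' ab ∧
    ∀ i j, i < j → j < m → label w ab.1 ab.2 i < label w ab.1 ab.2 j}

/-- Paths of length `m` in the `k`-Bruhat order from `w` to `w'` with strictly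
decreasing labels. -/
def DecPaths (N k m : ℕ) [NeZero N] (w w' : Equiv.Perm (Fin N)) :
    Set ((ℕ → ℕ) × (ℕ → ℕ)) :=
  {ab | PathWit N k m w w' ab ∧
    ∀ i j, i < j → j < m → label w ab.1 ab.2 j < label w ab.1 ab.2 i}


/-- The cycle `(x₁ x₂ … x_r)` (sending `x₁ ↦ x₂ ↦ ⋯ ↦ x_r ↦ x₁`), as a product
of transpositions. -/
def cycleList (N : ℕ) [NeZero N] (l : List ℕ) : Equiv.Perm (Fin N) :=
  ((l.zip l.tail).map fun p => t N p.1 p.2).prod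

/-- The Grassmannian permutation `h[k;p,q]` of descent `k` and hook shape `(p,1^{q-1})`:
the `(p+q)`-cycle `(k-q+1  k-q+2 … k  k+p  k+p-1 … k+1)`. -/
def hookPerm (N k p q : ℕ) [NeZero N] : Equiv.Perm (Fin N) :=
  cycleList N (((List.range q).map fun i => k - q + 1 + i) ++
    ((List.range p).reverse.map fun i => k + 1 + i))

/-- `w|ₚ ∈ S_{N-1}`: delete row `p` and column `w(p)` from the permutation matrix of `w`. -/
def drop {N : ℕ} (w : Equiv.Perm (Fin (N + 1))) (p : Fin (N + 1)) : Equiv.Perm (Fin N) :=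
  Equiv.removeNone (((finSuccEquiv' p).symm.trans (w : Fin (N + 1) ≃ Fin (N + 1))).trans
    (finSuccEquiv' (w p)))

/-- `lam` is a partition with at most `k` parts (1-indexed parts `lam 1 ≥ lam 2 ≥ ⋯`,
normalized by `lam 0 = 0`). -/
def IsPartFun (k : ℕ) (lam : ℕ → ℕ) : Prop :=
  lam 0 = 0 ∧ (∀ j, 1 ≤ j → lam (j + 1) ≤ lam j) ∧ ∀ j, k < j → lam j = 0

/-- `h_d(x₁,…,x_k)` for an integer `d`, with `h_d = 0` for `d < 0`. -/
noncomputable def hPolyZ (N k : ℕ) (d : ℤ) : MvPolynomial (Fin N) ℤ :=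
  if 0 ≤ d then hPoly N k d.toNat else 0

/-- The Schur polynomial `s_λ(x₁,…,x_k)`, via the Jacobi–Trudi determinant
`det(h_{λᵢ+j-i})_{1 ≤ i,j ≤ k}`. -/
noncomputable def schurPoly (N k : ℕ) (lam : ℕ → ℕ) : MvPolynomial (Fin N) ℤ :=
  (Matrix.of fun i j : Fin k =>
    hPolyZ N k ((lam ((i : ℕ) + 1) : ℤ) + (j : ℕ) - (i : ℕ))).det

/-- `r_j = #{i : aᵢ = j}` (with `i` ranging over `0,…,m-1`, 0-indexed). -/
def rJ (a : ℕ → ℕ) (m j : ℕ) : ℕ := ((Finset.range m).filter fun i => a i = j).card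

/-- `μ_j = r_{j+1} + ⋯ + r_k`. -/
def muJ (a : ℕ → ℕ) (m k j : ℕ) : ℕ :=
  if j = 0 then 0 else ∑ j' ∈ Finset.Icc (j + 1) k, rJ a m j'

/-- `λ_j = μ_j + r_j`. -/
def lamJ (a : ℕ → ℕ) (m k j : ℕ) : ℕ :=
  if j = 0 then 0 else muJ a m k j + rJ a m j

/-- `d_j = #{i : bᵢ = N+1-j}` (with `i` ranging over `0,…,m-1`, 0-indexed). -/
def dJ (b : ℕ → ℕ) (m N j : ℕ) : ℕ :=
  ((Finset.range m).filter fun i => b i = N + 1 - j).card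

/-- `μ′_j = d_{j+1} + ⋯ + d_{N-k}`. -/
def muJ' (b : ℕ → ℕ) (m N k j : ℕ) : ℕ :=
  if j = 0 then 0 else ∑ j' ∈ Finset.Icc (j + 1) (N - k), dJ b m N j'

/-- `λ′_j = μ′_j + d_j`. -/
def lamJ' (b : ℕ → ℕ) (m N k j : ℕ) : ℕ :=
  if j = 0 then 0 else muJ' b m N k j + dJ b m N j

/-- The conjugate (transpose) partition: `νᵗ_j = #{i : νᵢ ≥ j}`, for `ν` with at
most `k` parts. -/
def conjPart (k : ℕ) (nu : ℕ → ℕ) (j : ℕ) : ℕ :=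
  if j = 0 then 0 else ((Finset.Icc 1 k).filter fun i => j ≤ nu i).card

/-- `wv` is the Grassmannian permutation of descent `k` and shape `nu`:
`wv(j) = j + ν_{k+1-j}` for `1 ≤ j ≤ k`, and `wv` is increasing on `{k+1,…,N}`. -/
def IsGrassOf (N k : ℕ) [NeZero N] (nu : ℕ → ℕ) (wv : Equiv.Perm (Fin N)) : Prop :=
  (∀ j, 1 ≤ j → j ≤ k → val wv j = j + nu (k + 1 - j)) ∧
  (∀ j, k < j → j < N → val wv j < val wv (j + 1))

/-- Paths of length `m` in the `k`-Bruhat order from `w` to `w'` whose labels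
increase strictly for the first `p` steps and decrease strictly thereafter
(positions `p, p+1, …, m` being decreasing, 1-indexed). -/
def IncDecPaths (N k m p : ℕ) [NeZero N] (w w' : Equiv.Perm (Fin N)) :
    Set ((ℕ → ℕ) × (ℕ → ℕ)) :=
  {ab | PathWit N k m w w' ab ∧
    (∀ i j, i < j → j < p → label w ab.1 ab.2 i < label w ab.1 ab.2 j) ∧
    (∀ i j, p - 1 ≤ i → i < j → j < m → label w ab.1 ab.2 j < label w ab.1 ab.2 i)}

/-- Paths of length `m` in the `k`-Bruhat order from `w` to `w'` whose labels
decrease strictly for the first `q` steps and increase strictly thereafter. -/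
def DecIncPaths (N k m q : ℕ) [NeZero N] (w w' : Equiv.Perm (Fin N)) :
    Set ((ℕ → ℕ) × (ℕ → ℕ)) :=
  {ab | PathWit N k m w w' ab ∧
    (∀ i j, i < j → j < q → label w ab.1 ab.2 j < label w ab.1 ab.2 i) ∧
    (∀ i j, q - 1 ≤ i → i < j → j < m → label w ab.1 ab.2 i < label w ab.1 ab.2 j)}

/-!
On the free abelian group on `Sₙ`, let `A_l` be the sum of all steps of the `k`-Bruhat order with
label `l`. The two right-hand sides of the theorem are the images, under `w ↦ 𝔖_w`, of sums of
words in these noncommuting operators over hook-shaped label sequences, applied to `w`. The point is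
that such a hook sum acts on Schubert classes as multiplication by an element `r` of `Hₙ` that does
not depend on `w`. Then `w = 1` suffices: a single hook word survives there, it leads to
`h[k;p,q]`, and `r = 𝔖_{h[k;p,q]}` follows.

Since `A_l² = 0`, an increasing sum times a decreasing sum is the sum of two hook sums of adjacent
shapes, so by induction on the shape it is enough to treat decreasing words, the analogue of the
elementary symmetric polynomials in `x₁, …, x_k`. There one inducts on `k`: adding a position
changes the decreasing sums by the rule `e_m(x, y) = e_m(x) + e_{m-1}(x) y`, where `y` is the
operator by which the new variable acts on Schubert classes according to Monk's rule.
-/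

section Cover

variable {N : ℕ}

/-- Right multiplication by the transposition `(a b)`, `a < b`, is a Bruhat cover of `w`: it raises
the length by exactly one (see `len_mul_swap_eq_iff`). -/
def IsCover (w : Perm (Fin N)) (a b : Fin N) : Prop :=
  a < b ∧ w a < w b ∧ ∀ c, a < c → c < b → ¬(w a < w c ∧ w c < w b)

variable {w : Perm (Fin N)} {a b c d i j k : Fin N}

lemma IsCover.mul_swap_of_disjoint (hac : a ≠ c) (had : a ≠ d) (hbc : b ≠ c) (hbd : b ≠ d)
    (h₁ : IsCover w a b) (h₂ : IsCover (w * swap a b) c d) :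
    IsCover w c d ∧ IsCover (w * swap c d) a b := by
  have inj := w.injective
  simp only [IsCover, Perm.mul_apply, swap_apply_def] at *
  grind

lemma isCover_pair_left_iff (hak : a < k) (hkb : k < b) :
    IsCover w k b ∧ IsCover (w * swap k b) a k ↔
      w k < w b ∧ w a < w b ∧ (∀ c, k < c → c < b → ¬(w k < w c ∧ w c < w b)) ∧
        ∀ c, a < c → c < k → ¬(w a < w c ∧ w c < w b) := by
  have h (x) (hx : x < k) : swap k b x = x := swap_apply_of_ne_of_ne hx.ne (hx.trans hkb).ne
  simp only [IsCover, Perm.mul_apply, swap_apply_left, h a hak]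
  grind

lemma isCover_pair_middle_iff (hak : a < k) (hkb : k < b) :
    IsCover w a b ∧ IsCover (w * swap a b) k b ↔
      w k < w a ∧ IsCover w k b ∧ IsCover (w * swap k b) a k := by
  have h (x) (hx : k ≤ x) (hx' : x < b) : swap a b x = x :=
    swap_apply_of_ne_of_ne (hak.trans_le hx).ne' hx'.ne
  have inj := w.injective
  rw [isCover_pair_left_iff hak hkb]
  simp only [IsCover, Perm.mul_apply, swap_apply_right, h k le_rfl hkb]
  grind

lemma isCover_pair_right_iff (hak : a < k) (hkb : k < b) :
    IsCover w a k ∧ IsCover (w * swap a k) a b ↔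
      w a < w k ∧ IsCover w k b ∧ IsCover (w * swap k b) a k := by
  have h (x) (hx : k < x) : swap a k x = x := swap_apply_of_ne_of_ne (hak.trans hx).ne' hx.ne'
  have inj := w.injective
  rw [isCover_pair_left_iff hak hkb]
  simp only [IsCover, Perm.mul_apply, swap_apply_left, h b hkb, swap_apply_def]
  grind

lemma swap_adjacent_lt_iff (hij : (j : ℕ) = i + 1) (h₁ : ¬(a = i ∧ b = j))
    (h₂ : ¬(a = j ∧ b = i)) : swap i j a < swap i j b ↔ a < b := by
  simp only [swap_apply_def]
  split_ifs <;> grind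

lemma IsCover.descent_of_descent_mul_swap (hij : (j : ℕ) = i + 1) (hab : ¬(a = i ∧ b = j))
    (h : IsCover w a b) (hd : (w * swap a b) j < (w * swap a b) i) : w j < w i := by
  have inj := w.injective
  simp only [IsCover, Perm.mul_apply, swap_apply_def] at *
  grind

lemma isCover_mul_swap_adjacent_iff (hij : (j : ℕ) = i + 1) (hab : ¬(a = i ∧ b = j))
    (hba : ¬(a = j ∧ b = i)) (hd : w j < w i) (hd' : (w * swap a b) j < (w * swap a b) i) :
    IsCover (w * swap i j) (swap i j a) (swap i j b) ↔ IsCover w a b := by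
  simp only [IsCover, Perm.mul_apply, swap_apply_self, swap_adjacent_lt_iff hij hab hba]
  refine and_congr_right fun _ => and_congr_right fun _ => (swap i j).forall_congr fun {c} => ?_
  by_cases hc : w a < w (swap i j c) ∧ w (swap i j c) < w b
  · have hac : swap i j a < c ↔ a < swap i j c := by
      rw [← swap_adjacent_lt_iff (b := swap i j c) hij, swap_apply_self] <;>
        simp only [Perm.mul_apply, swap_apply_def] at * <;> grind
    have hcb : c < swap i j b ↔ swap i j c < b := by
      rw [← swap_adjacent_lt_iff (a := swap i j c) hij, swap_apply_self] <;>
        simp only [Perm.mul_apply, swap_apply_def] at * <;> grind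
    rw [hac, hcb]
  · simp only [hc, not_false_eq_true, implies_true]

lemma isCover_adjacent_iff (hij : (j : ℕ) = i + 1) : IsCover w i j ↔ w i < w j :=
  ⟨fun h => h.2.1, fun h => ⟨by grind, h, by grind⟩⟩


/-- The free abelian group on `Sₙ`; its basis vector at `w` stands for the Schubert class of `w`. -/
abbrev PermModule (N : ℕ) := Perm (Fin N) →₀ ℤ

/-- The basis vector of `PermModule N` indexed by `w`. -/
noncomputable abbrev basisVec (w : Perm (Fin N)) : PermModule N := Finsupp.single w 1

lemma PermModule.hom_ext {M : Type*} [AddCommGroup M] {f g : PermModule N →ₗ[ℤ] M}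
    (h : ∀ w, f (basisVec w) = g (basisVec w)) : f = g :=
  Finsupp.lhom_ext' fun w => LinearMap.ext_ring (h w)

/-- The operator `w ↦ w (a b)` if this is a Bruhat cover, `w ↦ 0` otherwise. -/
noncomputable def coverOp (a b : Fin N) : Module.End ℤ (PermModule N) :=
  Finsupp.linearCombination ℤ fun w => if IsCover w a b then basisVec (w * swap a b) else 0

/-- The divided difference at the adjacent positions `i`, `j` on the level of permutations. -/
noncomputable def descentOp (i j : Fin N) : Module.End ℤ (PermModule N) :=
  Finsupp.linearCombination ℤ fun w => if w j < w i then basisVec (w * swap i j) else 0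

/-- The operator by which, according to Monk's rule, the variable `x_l` acts on Schubert classes. -/
noncomputable def monkOp (l : Fin N) : Module.End ℤ (PermModule N) :=
  ∑ b, (coverOp l b - coverOp b l)

@[simp]
lemma coverOp_basisVec (a b : Fin N) (w : Perm (Fin N)) :
    coverOp a b (basisVec w) = if IsCover w a b then basisVec (w * swap a b) else 0 := by
  simp [coverOp]

@[simp]
lemma descentOp_basisVec (i j : Fin N) (w : Perm (Fin N)) :
    descentOp i j (basisVec w) = if w j < w i then basisVec (w * swap i j) else 0 := by
  simp [descentOp]

lemma coverOp_mul_basisVec (a b c d : Fin N) (w : Perm (Fin N)) :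
    (coverOp a b * coverOp c d) (basisVec w) =
      if IsCover w c d ∧ IsCover (w * swap c d) a b then basisVec (w * swap c d * swap a b)
      else 0 := by
  rw [Module.End.mul_apply, coverOp_basisVec]
  split_ifs <;> simp_all

lemma coverOp_eq_zero (h : ¬a < b) : coverOp a b = 0 :=
  PermModule.hom_ext fun w => by
    rw [coverOp_basisVec, if_neg fun hc => h hc.1, LinearMap.zero_apply]

lemma coverOp_commute (hac : a ≠ c) (had : a ≠ d) (hbc : b ≠ c) (hbd : b ≠ d) :
    Commute (coverOp a b) (coverOp c d) := by
  refine PermModule.hom_ext fun w => ?_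
  have hcomm : IsCover w c d ∧ IsCover (w * swap c d) a b ↔
      IsCover w a b ∧ IsCover (w * swap a b) c d :=
    ⟨fun h => h.1.mul_swap_of_disjoint hac.symm hbc.symm had.symm hbd.symm h.2,
      fun h => h.1.mul_swap_of_disjoint hac had hbc hbd h.2⟩
  have hswap : w * swap c d * swap a b = w * swap a b * swap c d := by
    rw [mul_assoc, mul_assoc, mul_swap_eq_swap_mul, swap_apply_of_ne_of_ne hac had,
      swap_apply_of_ne_of_ne hbc hbd]
  simp only [coverOp_mul_basisVec, hcomm, hswap]

lemma coverOp_three_term (hak : a < k) (hkb : k < b) :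
    coverOp a k * coverOp k b = coverOp k b * coverOp a b + coverOp a b * coverOp a k := by
  refine PermModule.hom_ext fun w => ?_
  have hmid : swap a b * swap k b = swap k b * swap a k := by
    ext x; simp only [Perm.mul_apply, swap_apply_def]; grind
  have hright : swap a k * swap a b = swap k b * swap a k := by
    ext x; simp only [Perm.mul_apply, swap_apply_def]; grind
  simp only [LinearMap.add_apply, coverOp_mul_basisVec, isCover_pair_middle_iff hak hkb,
    isCover_pair_right_iff hak hkb, mul_assoc, hmid, hright]
  rcases lt_or_gt_of_ne (w.injective.ne hak.ne) with h | h <;> simp [h, h.not_gt]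

lemma mul_swap_mul_swap_conj (w : Perm (Fin N)) (i j a b : Fin N) :
    w * swap i j * swap (swap i j a) (swap i j b) = w * swap a b * swap i j := by
  rw [mul_assoc, mul_swap_eq_swap_mul, swap_apply_self, swap_apply_self, ← mul_assoc]

lemma isCover_and_descent_iff (hij : (j : ℕ) = i + 1) (hab : ¬(a = i ∧ b = j))
    (hba : ¬(a = j ∧ b = i)) :
    IsCover w a b ∧ (w * swap a b) j < (w * swap a b) i ↔
      w j < w i ∧ IsCover (w * swap i j) (swap i j a) (swap i j b) := by
  constructor
  · rintro ⟨hc, hd'⟩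
    have hd := hc.descent_of_descent_mul_swap hij hab hd'
    exact ⟨hd, (isCover_mul_swap_adjacent_iff hij hab hba hd hd').2 hc⟩
  · rintro ⟨hd, hc⟩
    have hd' : (w * swap a b) j < (w * swap a b) i := by
      by_contra h
      have hne : (w * swap a b) j ≠ (w * swap a b) i := (w * swap a b).injective.ne (by grind)
      have hlt : (w * swap i j * swap (swap i j a) (swap i j b)) j <
          (w * swap i j * swap (swap i j a) (swap i j b)) i := by
        rw [mul_swap_mul_swap_conj, Perm.mul_apply _ (swap i j), Perm.mul_apply _ (swap i j),
          swap_apply_left, swap_apply_right]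
        exact lt_of_le_of_ne (not_lt.1 h) hne.symm
      have := hc.descent_of_descent_mul_swap hij (by simp [swap_apply_eq_iff]; grind) hlt
      simp [Perm.mul_apply, hd.not_gt] at this
    exact ⟨(isCover_mul_swap_adjacent_iff hij hab hba hd hd').1 hc, hd'⟩

lemma descentOp_mul_coverOp (hij : (j : ℕ) = i + 1) (hab : ¬(a = i ∧ b = j))
    (hba : ¬(a = j ∧ b = i)) :
    descentOp i j * coverOp a b = coverOp (swap i j a) (swap i j b) * descentOp i j := by
  refine PermModule.hom_ext fun w => ?_
  have hl : (descentOp i j * coverOp a b) (basisVec w) =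
      if IsCover w a b ∧ (w * swap a b) j < (w * swap a b) i then
        basisVec (w * swap a b * swap i j) else 0 := by
    rw [Module.End.mul_apply, coverOp_basisVec, ite_and]
    split_ifs <;> simp only [descentOp_basisVec, map_zero, if_true, if_false, *]
  rw [hl, Module.End.mul_apply, descentOp_basisVec]
  simp only [isCover_and_descent_iff hij hab hba]
  split_ifs <;> simp_all [mul_swap_mul_swap_conj]

lemma descentOp_mul_coverOp_adjacent (hij : (j : ℕ) = i + 1) :
    descentOp i j * coverOp i j = 1 - coverOp i j * descentOp i j := by
  refine PermModule.hom_ext fun w => ?_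
  have hne : w i ≠ w j := w.injective.ne (by grind)
  rcases lt_or_gt_of_ne hne with h | h <;>
    simp [Module.End.mul_apply, isCover_adjacent_iff hij, h, h.not_gt, mul_assoc]

lemma descentOp_mul_coverOp_sub (hij : (j : ℕ) = i + 1) (a b : Fin N) :
    descentOp i j * (coverOp a b - coverOp b a) =
      (coverOp (swap i j a) (swap i j b) - coverOp (swap i j b) (swap i j a)) * descentOp i j +
        ((if a = i ∧ b = j then 1 else 0) - if a = j ∧ b = i then 1 else 0) := by
  have hlt : i < j := by grind
  have hne : i ≠ j := hlt.ne
  have h0 : coverOp j i = 0 := coverOp_eq_zero hlt.not_gt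
  by_cases h₁ : a = i ∧ b = j
  · obtain ⟨rfl, rfl⟩ := h₁
    simp only [swap_apply_left, swap_apply_right, h0, sub_zero, zero_sub,
      descentOp_mul_coverOp_adjacent hij, and_self, if_true, hne, if_false, false_and, neg_mul]
    abel
  by_cases h₂ : a = j ∧ b = i
  · obtain ⟨rfl, rfl⟩ := h₂
    simp only [swap_apply_left, swap_apply_right, h0, sub_zero, zero_sub, hne.symm,
      descentOp_mul_coverOp_adjacent hij, and_self, if_true, if_false, false_and, mul_neg]
    abel
  rw [mul_sub, descentOp_mul_coverOp hij h₁ h₂, descentOp_mul_coverOp hij (by tauto) (by tauto),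
    if_neg h₁, if_neg h₂, sub_zero, add_zero, sub_mul]

lemma descentOp_mul_monkOp (hij : (j : ℕ) = i + 1) (l : Fin N) :
    descentOp i j * monkOp l = monkOp (swap i j l) * descentOp i j +
      ((if l = i then 1 else 0) - if l = j then 1 else 0) := by
  have hreindex : monkOp (swap i j l) =
      ∑ b, (coverOp (swap i j l) (swap i j b) - coverOp (swap i j b) (swap i j l)) :=
    (Equiv.sum_comp (swap i j) fun b => coverOp (swap i j l) b - coverOp b (swap i j l)).symm
  rw [hreindex, monkOp, Finset.mul_sum, Finset.sum_mul]
  simp [descentOp_mul_coverOp_sub hij, Finset.sum_add_distrib, ite_and]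

end Cover

section LabelOperators

variable {N : ℕ}

/-- The operator summing, over all `a < k ≤ b` and all covers `w ↦ w (a b)` that move the value `l`
from position `b` to position `a`, the resulting permutations: one step with label `l` in the
`k`-Bruhat order (positions are counted from `0`). -/
noncomputable def labelOp (k : ℕ) (l : Fin N) : Module.End ℤ (PermModule N) :=
  Finsupp.linearCombination ℤ fun w =>
    if k ≤ (w.symm l : ℕ) then ∑ a : Fin N with a.val < k, coverOp a (w.symm l) (basisVec w) else 0

/-- The part of `monkOp κ` that only moves values smaller than `J`. -/
noncomputable def partialMonkOp (κ : Fin N) (J : ℕ) : Module.End ℤ (PermModule N) :=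
  Finsupp.linearCombination ℤ fun w =>
    ∑ c, ((if (w c : ℕ) < J then coverOp κ c (basisVec w) else 0) -
      if (w κ : ℕ) < J then coverOp c κ (basisVec w) else 0)

variable {k J : ℕ} {a b c x y κ l : Fin N} {w : Perm (Fin N)}

lemma labelOp_basisVec (k : ℕ) (b : Fin N) (w : Perm (Fin N)) :
    labelOp k (w b) (basisVec w) =
      if k ≤ (b : ℕ) then ∑ a : Fin N with a.val < k, coverOp a b (basisVec w) else 0 := by
  simp only [labelOp, Finsupp.linearCombination_single, symm_apply_apply, one_smul]

lemma partialMonkOp_basisVec (κ : Fin N) (J : ℕ) (w : Perm (Fin N)) :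
    partialMonkOp κ J (basisVec w) = ∑ c, ((if (w c : ℕ) < J then coverOp κ c (basisVec w) else 0) -
      if (w κ : ℕ) < J then coverOp c κ (basisVec w) else 0) := by
  simp only [partialMonkOp, Finsupp.linearCombination_single, one_smul]

lemma labelOp_coverOp (k : ℕ) (x y b : Fin N) (w : Perm (Fin N)) :
    labelOp k (w b) (coverOp x y (basisVec w)) = if k ≤ (swap x y b : ℕ) then
      ∑ a : Fin N with a.val < k, coverOp a (swap x y b) (coverOp x y (basisVec w)) else 0 := by
  rw [coverOp_basisVec]
  split_ifs with hc h
  · simpa [h] using labelOp_basisVec k (swap x y b) (w * swap x y)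
  · simpa [h] using labelOp_basisVec k (swap x y b) (w * swap x y)
  all_goals simp

lemma partialMonkOp_coverOp (κ : Fin N) (J : ℕ) (x y : Fin N) (w : Perm (Fin N)) :
    partialMonkOp κ J (coverOp x y (basisVec w)) =
      ∑ c, ((if (w (swap x y c) : ℕ) < J then coverOp κ c (coverOp x y (basisVec w)) else 0) -
        if (w (swap x y κ) : ℕ) < J then coverOp c κ (coverOp x y (basisVec w)) else 0) := by
  by_cases hc : IsCover w x y
  · rw [coverOp_basisVec x y, if_pos hc]
    exact partialMonkOp_basisVec κ J (w * swap x y)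
  · simp [hc]

lemma partialMonkOp_zero (κ : Fin N) : partialMonkOp κ 0 = 0 :=
  PermModule.hom_ext fun w => by simp [partialMonkOp_basisVec]

lemma partialMonkOp_size (κ : Fin N) : partialMonkOp κ N = monkOp κ :=
  PermModule.hom_ext fun w => by simp [partialMonkOp_basisVec, monkOp]

lemma coverOp_basisVec_eq_zero (h : w b ≤ w a) : coverOp a b (basisVec w) = 0 := by
  rw [coverOp_basisVec, if_neg fun hc => h.not_gt hc.2.1]

lemma coverOp_coverOp_basisVec_eq_zero (h : w (swap x y b) ≤ w (swap x y a)) :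
    coverOp a b (coverOp x y (basisVec w)) = 0 := by
  rw [← Module.End.mul_apply, coverOp_mul_basisVec, if_neg fun hc => h.not_gt hc.2.2.1]

lemma labelOp_zero (l : Fin N) : labelOp 0 l = 0 :=
  PermModule.hom_ext fun w => by
    obtain ⟨b, rfl⟩ := w.surjective l
    simp [labelOp_basisVec]

lemma labelOp_mul_self (k : ℕ) (l : Fin N) : labelOp k l * labelOp k l = 0 := by
  refine PermModule.hom_ext fun w => ?_
  obtain ⟨b, rfl⟩ := w.surjective l
  rw [Module.End.mul_apply, labelOp_basisVec]
  split_ifs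
  · rw [map_sum]
    refine Finset.sum_eq_zero fun a ha => ?_
    rw [labelOp_coverOp, swap_apply_right, if_neg (Finset.mem_filter.1 ha).2.not_ge]
  · exact map_zero _

lemma labelOp_succ_sub_basisVec (κ b : Fin N) (w : Perm (Fin N)) :
    (labelOp (κ + 1) (w b) - labelOp κ (w b)) (basisVec w) =
      coverOp κ b (basisVec w) - if κ = b then ∑ a, coverOp a b (basisVec w) else 0 := by
  have hsucc : (Finset.univ.filter fun a : Fin N => (a : ℕ) < κ + 1) =
      insert κ (Finset.univ.filter fun a : Fin N => (a : ℕ) < κ) := by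
    ext; simp; grind
  rw [LinearMap.sub_apply, labelOp_basisVec, labelOp_basisVec, hsucc,
    Finset.sum_insert (by simp)]
  rcases lt_trichotomy κ b with h | rfl | h
  · rw [if_pos (by omega), if_pos (by omega), if_neg h.ne]
    abel
  · have hall : ∑ a, coverOp a κ (basisVec w) =
        ∑ a with a < κ, coverOp a κ (basisVec w) := by
      refine (Finset.sum_filter_of_ne (p := (· < κ)) fun a _ ha => ?_).symm
      by_contra hlt
      exact ha (by rw [coverOp_eq_zero hlt, LinearMap.zero_apply])
    rw [if_neg (by omega), if_pos le_rfl, if_pos rfl, hall,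
      coverOp_eq_zero (lt_irrefl κ), LinearMap.zero_apply]
    simp only [Fin.val_fin_lt]
  · rw [if_neg (by omega), if_neg (by omega), if_neg h.ne', coverOp_eq_zero h.not_gt]
    simp

lemma partialMonkOp_succ (κ l : Fin N) :
    partialMonkOp κ (l + 1) = partialMonkOp κ l + (labelOp (κ + 1) l - labelOp κ l) := by
  refine PermModule.hom_ext fun w => ?_
  obtain ⟨b, rfl⟩ := w.surjective l
  have hle (c : Fin N) : (w c : ℕ) < w b + 1 ↔ (w c : ℕ) < w b ∨ c = b := by
    rw [← w.injective.eq_iff, ← Fin.val_inj]; omega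
  have hdisj (c : Fin N) {x : PermModule N} : (if (w c : ℕ) < w b + 1 then x else 0) =
      (if (w c : ℕ) < w b then x else 0) + if c = b then x else 0 := by
    simp only [hle]; grind
  rw [LinearMap.add_apply, labelOp_succ_sub_basisVec, partialMonkOp_basisVec,
    partialMonkOp_basisVec]
  simp only [hdisj, Finset.sum_add_distrib, Finset.sum_sub_distrib]
  rw [Fintype.sum_ite_eq']
  rcases eq_or_ne κ b with rfl | h
  · simp only [lt_irrefl, if_false, if_true, Finset.sum_const_zero]; abel
  · simp only [h, if_false, Finset.sum_const_zero]; abel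

lemma partialMonkOp_coverOp_sub (hak : a < κ) (hkb : κ < b) (w : Perm (Fin N)) :
    partialMonkOp κ (w b) (coverOp a b (basisVec w)) -
        coverOp a b (partialMonkOp κ (w b) (basisVec w)) =
      coverOp a κ (coverOp κ b (basisVec w)) := by
  have hab := hak.trans hkb
  have hfix : swap a b κ = κ := swap_apply_of_ne_of_ne hak.ne' hkb.ne
  have hcomm (c : Fin N) (hca : c ≠ a) (hcb : c ≠ b) :
      coverOp κ c (coverOp a b (basisVec w)) = coverOp a b (coverOp κ c (basisVec w)) ∧
      coverOp c κ (coverOp a b (basisVec w)) = coverOp a b (coverOp c κ (basisVec w)) :=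
    ⟨LinearMap.congr_fun (coverOp_commute hak.ne' hkb.ne hca hcb) _,
      LinearMap.congr_fun (coverOp_commute hca hcb hak.ne' hkb.ne) _⟩
  have hthree := LinearMap.congr_fun (coverOp_three_term hak hkb) (basisVec w)
  simp only [LinearMap.add_apply, Module.End.mul_apply] at hthree
  have hb : (if w a < w b then coverOp κ b (coverOp a b (basisVec w)) else 0) =
      coverOp κ b (coverOp a b (basisVec w)) := by
    split_ifs with h
    · rfl
    · rw [coverOp_basisVec_eq_zero (not_lt.1 h), map_zero]
  have ha : (if w κ < w b then coverOp a κ (coverOp a b (basisVec w)) else 0) = 0 := by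
    split_ifs with h
    · exact coverOp_coverOp_basisVec_eq_zero (by simpa [hfix] using h.le)
    · rfl
  have ha' : (if w κ < w b then coverOp a b (coverOp a κ (basisVec w)) else 0) =
      coverOp a b (coverOp a κ (basisVec w)) := by
    split_ifs with h
    · rfl
    · refine (coverOp_coverOp_basisVec_eq_zero ?_).symm
      rw [swap_apply_left, swap_apply_of_ne_of_ne hab.ne' hkb.ne']
      exact not_lt.1 h
  rw [partialMonkOp_coverOp, partialMonkOp_basisVec, map_sum, ← Finset.sum_sub_distrib,
    Fintype.sum_eq_add a b hab.ne, hthree]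
  · simp only [swap_apply_left, swap_apply_right, hfix, Fin.val_fin_lt, lt_irrefl, if_false,
      coverOp_eq_zero hak.not_gt, coverOp_eq_zero hkb.not_gt, LinearMap.zero_apply, ite_self,
      map_sub, map_zero, apply_ite (coverOp a b), ha, ha', hb]
    abel
  · rintro c ⟨hca, hcb⟩
    simp only [hfix, swap_apply_of_ne_of_ne hca hcb, hcomm c hca hcb, map_sub, map_zero,
      apply_ite (coverOp a b), sub_self]

lemma labelOp_partialMonkOp_of_lt (hkb : κ < b) (w : Perm (Fin N)) :
    labelOp κ (w b) (partialMonkOp κ (w b) (basisVec w)) =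
      ∑ a with a < κ, coverOp a b (partialMonkOp κ (w b) (basisVec w)) := by
  have hterm (x y : Fin N) (hx : b ≠ x) (hy : b ≠ y) :
      labelOp κ (w b) (coverOp x y (basisVec w)) =
        ∑ a with a < κ, coverOp a b (coverOp x y (basisVec w)) := by
    rw [labelOp_coverOp, swap_apply_of_ne_of_ne hx hy, if_pos (Fin.le_def.1 hkb.le)]
    simp only [Fin.val_fin_lt]
  rw [partialMonkOp_basisVec, map_sum]
  simp only [map_sum]
  rw [Finset.sum_comm]
  refine Finset.sum_congr rfl fun c _ => ?_
  rcases eq_or_ne b c with rfl | hc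
  · simp only [lt_irrefl, if_false, coverOp_eq_zero hkb.not_gt, LinearMap.zero_apply, ite_self,
      sub_zero, map_zero, Finset.sum_const_zero]
  · split_ifs <;>
      simp only [map_sub, map_zero, sub_zero, zero_sub, map_neg, hterm, hkb.ne', hc, Ne,
        not_false_eq_true, Finset.sum_sub_distrib, Finset.sum_neg_distrib, Finset.sum_const_zero]

lemma labelOp_partialMonkOp_of_le (hbk : b ≤ κ) (w : Perm (Fin N)) :
    labelOp κ (w b) (partialMonkOp κ (w b) (basisVec w)) = 0 := by
  have hterm (x y : Fin N) (hx : b ≠ x) (hy : b ≠ y) (hb : b ≠ κ) :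
      labelOp κ (w b) (coverOp x y (basisVec w)) = 0 := by
    rw [labelOp_coverOp, swap_apply_of_ne_of_ne hx hy, if_neg (by grind)]
  rw [partialMonkOp_basisVec, map_sum]
  refine Finset.sum_eq_zero fun c _ => ?_
  have hκc : labelOp κ (w b) (if w c < w b then coverOp κ c (basisVec w) else 0) = 0 := by
    split_ifs with h
    · rcases eq_or_ne b κ with rfl | hb
      · rw [coverOp_basisVec_eq_zero h.le, map_zero]
      · exact hterm _ _ hb (by grind) hb
    · exact map_zero _
  have hcκ : labelOp κ (w b) (if w κ < w b then coverOp c κ (basisVec w) else 0) = 0 := by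
    split_ifs with h
    · rcases eq_or_ne b c with rfl | hc
      · rw [coverOp_basisVec_eq_zero h.le, map_zero]
      · exact hterm _ _ hc (by grind) (by grind)
    · exact map_zero _
  simp only [Fin.val_fin_lt, map_sub, hκc, hcκ, sub_zero]

lemma labelOp_mul_labelOp_succ_basisVec (hkb : κ < b) (w : Perm (Fin N)) :
    labelOp κ (w b) (labelOp (κ + 1) (w b) (basisVec w)) =
      ∑ a with a < κ, coverOp a κ (coverOp κ b (basisVec w)) := by
  rw [labelOp_basisVec, if_pos (Nat.succ_le_of_lt hkb), map_sum, Finset.sum_eq_single κ]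
  · rw [labelOp_coverOp, swap_apply_right, if_pos le_rfl]
    simp only [Fin.val_fin_lt]
  · intro a ha hne
    rw [labelOp_coverOp, swap_apply_right, if_neg (by grind)]
  · simp

lemma partialMonkOp_mul_labelOp_succ_basisVec (hkb : κ < b) (w : Perm (Fin N)) :
    partialMonkOp κ (w b) (labelOp (κ + 1) (w b) (basisVec w)) =
      ∑ a with a < κ, partialMonkOp κ (w b) (coverOp a b (basisVec w)) := by
  have hκ : partialMonkOp κ (w b) (coverOp κ b (basisVec w)) = 0 := by
    rw [partialMonkOp_coverOp]
    refine Finset.sum_eq_zero fun c _ => ?_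
    rw [swap_apply_left, if_neg (lt_irrefl _), sub_zero]
    split_ifs with h
    · exact coverOp_coverOp_basisVec_eq_zero (by simpa using h.le)
    · rfl
  have hsucc : (Finset.univ.filter fun a : Fin N => (a : ℕ) < κ + 1) =
      insert κ (Finset.univ.filter (· < κ)) := by
    ext; simp; grind
  rw [labelOp_basisVec, if_pos (Nat.succ_le_of_lt hkb), map_sum, hsucc,
    Finset.sum_insert (by simp), hκ, zero_add]

lemma partialMonkOp_mul_labelOp_succ (κ l : Fin N) :
    partialMonkOp κ l * labelOp (κ + 1) l =
      labelOp κ l * partialMonkOp κ l + labelOp κ l * labelOp (κ + 1) l := by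
  refine PermModule.hom_ext fun w => ?_
  obtain ⟨b, rfl⟩ := w.surjective l
  simp only [LinearMap.add_apply, Module.End.mul_apply]
  rcases lt_or_ge κ b with hkb | hbk
  · rw [partialMonkOp_mul_labelOp_succ_basisVec hkb, labelOp_partialMonkOp_of_lt hkb,
      labelOp_mul_labelOp_succ_basisVec hkb, ← Finset.sum_add_distrib]
    refine Finset.sum_congr rfl fun a ha => ?_
    rw [← partialMonkOp_coverOp_sub (Finset.mem_filter.1 ha).2 hkb, add_sub_cancel]
  · rw [labelOp_partialMonkOp_of_le hbk, labelOp_basisVec, if_neg (by omega)]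
    simp only [map_zero, add_zero]

end LabelOperators

section Words

variable {α E : Type*} {m p q : ℕ} {r : α → α → Prop}

/-- `wordOp A L = A (L (m - 1)) ⋯ A (L 1) A (L 0)`: the letters of `L` act from left to right. -/
def wordOp [Monoid E] (A : α → E) (L : Fin m → α) : E :=
  ((List.ofFn L).map A).reverse.prod

/-- The word `L` is `r`-increasing on its first `p` letters and `r`-decreasing from the `p`-th
letter on. For `p = m` it is `r`-increasing, for `p = 0` and for `p = 1` it is `r`-decreasing. -/
def IsHookWord (r : α → α → Prop) (p : ℕ) (L : Fin m → α) : Prop :=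
  ∀ i j : Fin m, (j : ℕ) = i + 1 → if (j : ℕ) < p then r (L i) (L j) else r (L j) (L i)

/-- The noncommutative analogue of a hook Schur function: the sum of `wordOp A L` over the hook
words `L` of length `m`. -/
noncomputable def hookSum [Fintype α] [Semiring E] (A : α → E) (r : α → α → Prop) (m p : ℕ) : E :=
  ∑ L : Fin m → α, if IsHookWord r p L then wordOp A L else 0

section wordOp

variable [Monoid E] (A : α → E)

@[simp]
lemma wordOp_zero (L : Fin 0 → α) : wordOp A L = 1 := by
  simp [wordOp]

lemma wordOp_cons (a : α) (L : Fin m → α) :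
    wordOp A (Fin.cons a L : Fin (m + 1) → α) = wordOp A L * A a := by
  simp [wordOp]

lemma wordOp_succ (L : Fin (m + 1) → α) :
    wordOp A L = A (L (Fin.last m)) * wordOp A fun i => L i.castSucc := by
  rw [wordOp, List.ofFn_succ', List.concat_eq_append]
  simp [wordOp]

lemma wordOp_append (L₁ : Fin p → α) (L₂ : Fin q → α) :
    wordOp A (Fin.append L₁ L₂) = wordOp A L₂ * wordOp A L₁ := by
  simp [wordOp, List.ofFn_fin_append]

end wordOp

lemma wordOp_eq_zero_of_adjacent_eq [MonoidWithZero E] {A : α → E} (hA : ∀ l, A l * A l = 0)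
    {L : Fin m → α} {i j : Fin m} (hij : (j : ℕ) = i + 1) (h : L i = L j) : wordOp A L = 0 := by
  induction m with
  | zero => exact i.elim0
  | succ m ih =>
    rw [wordOp_succ]
    by_cases hj : (j : ℕ) = m
    · obtain ⟨m, rfl⟩ : ∃ m', m = m' + 1 := ⟨i, by omega⟩
      obtain rfl : j = Fin.last (m + 1) := Fin.ext hj
      obtain rfl : i = (Fin.last m).castSucc := Fin.ext (by simpa using hij.symm)
      rw [wordOp_succ, ← mul_assoc, h, hA, zero_mul]
    · rw [ih (L := fun i => L i.castSucc) (i := ⟨i, by omega⟩) (j := ⟨j, by omega⟩) hij h,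
        mul_zero]

lemma isHookWord_iff [IsTrans α r] {L : Fin m → α} :
    IsHookWord r p L ↔ (∀ i j : Fin m, i < j → (j : ℕ) < p → r (L i) (L j)) ∧
      ∀ i j : Fin m, p - 1 ≤ (i : ℕ) → i < j → r (L j) (L i) := by
  refine ⟨fun h => ?_, fun h i j hij => ?_⟩
  · have chain (d : ℕ) : ∀ i j : Fin m, (j : ℕ) = i + (d + 1) →
        ((j : ℕ) < p → r (L i) (L j)) ∧ (p - 1 ≤ (i : ℕ) → r (L j) (L i)) := by
      induction d with
      | zero =>
        intro i j hij
        have := h i j hij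
        grind
      | succ d ih =>
        intro i j hij
        have hi := h i ⟨i + 1, by omega⟩ rfl
        have hj := ih ⟨i + 1, by omega⟩ j (by simp; omega)
        refine ⟨fun hp => trans_of r ?_ (hj.1 hp), fun hp => trans_of r (hj.2 ?_) ?_⟩
        · simpa [show (i : ℕ) + 1 < p by omega] using hi
        · simp; omega
        · simpa [show ¬(i : ℕ) + 1 < p by omega] using hi
    exact ⟨fun i j hij => (chain (j - i - 1) i j (by omega)).1,
      fun i j hi hij => (chain (j - i - 1) i j (by omega)).2 hi⟩
  · split_ifs with hj
    · exact h.1 i j (by omega) hj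
    · exact h.2 i j (by omega) (by omega)

lemma IsHookWord.castSucc {L : Fin (m + 1) → α} (h : IsHookWord r p L) :
    IsHookWord r p fun i : Fin m => L i.castSucc :=
  fun i j hij => h i.castSucc j.castSucc hij

lemma isHookWord_self_and_isHookWord_zero_iff {L : Fin (p + q) → α} :
    IsHookWord r p (fun i => L (Fin.castAdd q i)) ∧ IsHookWord r 0 (fun i => L (Fin.natAdd p i)) ↔
      ∀ i j : Fin (p + q), (j : ℕ) = i + 1 → (j : ℕ) ≠ p →
        if (j : ℕ) < p then r (L i) (L j) else r (L j) (L i) := by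
  constructor
  · rintro ⟨hinc, hdec⟩ i j hij hjp
    rcases lt_or_gt_of_ne hjp with hj | hj
    · exact hinc ⟨i, by omega⟩ ⟨j, hj⟩ hij
    · have := hdec ⟨i - p, by omega⟩ ⟨j - p, by omega⟩ (by simp; omega)
      simpa [hj.not_gt, Fin.natAdd, show p + (i - p) = (i : ℕ) by omega,
        show p + (j - p) = (j : ℕ) by omega] using this
  · refine fun h => ⟨fun i j hij => ?_, fun i j hij => ?_⟩
    · simpa using h (Fin.castAdd q i) (Fin.castAdd q j) hij (by simp; omega)
    · simpa using h (Fin.natAdd p i) (Fin.natAdd p j) (by simp; omega) (by simp; omega)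

lemma isHookWord_iff_of_junction {L : Fin m → α} {d : ℕ} {u v : Fin m} (hu : (u : ℕ) + 1 = d)
    (hv : (v : ℕ) = d) (hp : p = d ∨ p = d + 1) : IsHookWord r p L ↔
      (∀ i j : Fin m, (j : ℕ) = i + 1 → (j : ℕ) ≠ d →
        if (j : ℕ) < d then r (L i) (L j) else r (L j) (L i)) ∧
      if p = d then r (L v) (L u) else r (L u) (L v) := by
  refine ⟨fun h => ⟨fun i j hij hj => ?_, ?_⟩, fun h i j hij => ?_⟩
  · have := h i j hij
    grind
  · have := h u v (hv.trans hu.symm)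
    grind
  · by_cases hj : (j : ℕ) = d
    · obtain rfl : j = v := Fin.ext (by omega)
      obtain rfl : i = u := Fin.ext (by omega)
      grind
    · have := h.1 i j hij hj
      grind

variable [Fintype α] [Semiring E] {A : α → E}

lemma hookSum_length_zero (A : α → E) (r : α → α → Prop) (p : ℕ) : hookSum A r 0 p = 1 := by
  simp [hookSum, IsHookWord]

lemma hookSum_one (A : α → E) (r : α → α → Prop) (m : ℕ) :
    hookSum A r m 1 = hookSum A r m 0 := by
  have h (L : Fin m → α) : IsHookWord r 1 L ↔ IsHookWord r 0 L :=
    forall₃_congr fun i j hij => by simp [hij]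
  simp only [hookSum, h]

lemma hookSum_swap_self (A : α → E) (r : α → α → Prop) (m : ℕ) :
    hookSum A (Function.swap r) m m = hookSum A r m 0 := by
  have h (L : Fin m → α) : IsHookWord (Function.swap r) m L ↔ IsHookWord r 0 L :=
    forall₃_congr fun i j _ => by simp [Function.swap]
  simp only [hookSum, h]

/-- In a concatenation of an increasing and a decreasing word, the two letters at the junction
decide to which of the two hook shapes it belongs; if they agree, its operator vanishes. -/
lemma hookSum_zero_mul_hookSum_self [IsStrictTotalOrder α r] (hA : ∀ l, A l * A l = 0)
    (hp : 1 ≤ p) (hq : 1 ≤ q) :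
    hookSum A r q 0 * hookSum A r p p = hookSum A r (p + q) p + hookSum A r (p + q) (p + 1) := by
  have hconcat : hookSum A r q 0 * hookSum A r p p = ∑ L : Fin (p + q) → α,
      if ∀ i j : Fin (p + q), (j : ℕ) = i + 1 → (j : ℕ) ≠ p →
        if (j : ℕ) < p then r (L i) (L j) else r (L j) (L i) then wordOp A L else 0 := by
    rw [← (Fin.appendEquiv p q).sum_comp, Fintype.sum_prod_type, hookSum, hookSum,
      Finset.sum_mul_sum, Finset.sum_comm]
    refine Finset.sum_congr rfl fun L₁ _ => Finset.sum_congr rfl fun L₂ _ => ?_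
    simp only [← isHookWord_self_and_isHookWord_zero_iff, Fin.appendEquiv, Equiv.coe_fn_mk,
      Fin.append_left, Fin.append_right, wordOp_append, ite_and, ite_mul, mul_ite, zero_mul,
      mul_zero]
  rw [hconcat, hookSum, hookSum, ← Finset.sum_add_distrib]
  refine Finset.sum_congr rfl fun L _ => ?_
  set u : Fin (p + q) := ⟨p - 1, by omega⟩
  set v : Fin (p + q) := ⟨p, by omega⟩
  have hu : (u : ℕ) + 1 = p := Nat.sub_add_cancel hp
  have hv : (v : ℕ) = p := rfl
  rw [isHookWord_iff_of_junction hu hv (.inl rfl), isHookWord_iff_of_junction hu hv (.inr rfl)]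
  simp only [if_true, Nat.add_eq_left, one_ne_zero, if_false]
  rcases trichotomous_of r (L u) (L v) with h | h | h
  · simp [h, asymm_of r h]
  · simp [wordOp_eq_zero_of_adjacent_eq hA hu.symm h]
  · simp [h, asymm_of r h]

end Words

section DecreasingWords

variable {N m : ℕ} {E : Type*} [Ring E]

/-- The sum of `wordOp A L` over the decreasing words `L` of length `m` with letters below `j`: the
noncommutative analogue of the elementary symmetric polynomial `e_m` in `j` variables. -/
noncomputable def decSum (A : Fin N → E) (j m : ℕ) : E :=
  ∑ L : Fin m → Fin N, if StrictAnti L ∧ ∀ i, (L i : ℕ) < j then wordOp A L else 0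

@[simp]
lemma decSum_length_zero (A : Fin N → E) (j : ℕ) : decSum A j 0 = 1 := by
  simp [decSum, Subsingleton.strictAnti]

lemma hookSum_lt_zero (A : Fin N → E) (m : ℕ) : hookSum A (· < ·) m 0 = decSum A N m := by
  have h (L : Fin m → Fin N) :
      IsHookWord (· < ·) 0 L ↔ StrictAnti L ∧ ∀ i, (L i : ℕ) < N := by
    simp [isHookWord_iff, StrictAnti]
  simp only [hookSum, decSum, h]

lemma strictAnti_cons_and_lt_iff {a : Fin N} {L : Fin m → Fin N} {j : ℕ} :
    (StrictAnti (Fin.cons a L : Fin (m + 1) → Fin N) ∧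
        ∀ i, ((Fin.cons a L : Fin (m + 1) → Fin N) i : ℕ) < j) ↔
      (a : ℕ) < j ∧ StrictAnti L ∧ ∀ i, (L i : ℕ) < a := by
  simp only [StrictAnti, Fin.forall_fin_succ, Fin.cons_zero, Fin.cons_succ, lt_irrefl,
    Fin.lt_def]
  grind

lemma decSum_succ (A : Fin N → E) (j m : ℕ) :
    decSum A j (m + 1) = ∑ a : Fin N, if (a : ℕ) < j then decSum A a m * A a else 0 := by
  rw [decSum, ← (Fin.consEquiv fun _ => Fin N).sum_comp, Fintype.sum_prod_type]
  refine Finset.sum_congr rfl fun a _ => ?_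
  simp only [Fin.consEquiv, Equiv.coe_fn_mk, strictAnti_cons_and_lt_iff, wordOp_cons, decSum,
    Finset.sum_mul, ite_and (_ < j), ite_mul, zero_mul]
  split_ifs <;> simp

@[simp]
lemma decSum_bound_zero (A : Fin N → E) (m : ℕ) : decSum A 0 (m + 1) = 0 := by
  simp [decSum_succ]

lemma decSum_bound_succ (A : Fin N → E) (j : Fin N) (m : ℕ) :
    decSum A (j + 1) (m + 1) = decSum A j (m + 1) + decSum A j m * A j := by
  rw [decSum_succ, decSum_succ, ← sub_eq_iff_eq_add', ← Finset.sum_sub_distrib,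
    Finset.sum_eq_single j (fun b _ hb => ?_) (by simp)]
  · simp
  · have : (b : ℕ) < j + 1 ↔ (b : ℕ) < j := by
      have := Fin.val_ne_of_ne hb
      omega
    simp [this]

/-- Changing the letters from `A` to `B` changes `decSum` by a multiple of `Y`, where `Y` collects
the increments `B l - A l`; this mimics `e_m(x, y) = e_m(x) + e_{m-1}(x) y`. -/
lemma decSum_succ_of_increment {A B : Fin N → E} {Y : ℕ → E} (hY₀ : Y 0 = 0)
    (hY : ∀ l : Fin N, Y (l + 1) = Y l + (B l - A l))
    (hYB : ∀ l : Fin N, Y l * B l = A l * Y l + A l * B l) (hA : ∀ l, A l * A l = 0)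
    {j : ℕ} (hj : j ≤ N) (m : ℕ) :
    decSum B j (m + 1) = decSum A j (m + 1) + decSum A j m * Y j := by
  induction j generalizing m with
  | zero => simp [hY₀]
  | succ j ih =>
    obtain ⟨l, rfl⟩ : ∃ l : Fin N, (l : ℕ) = j := ⟨⟨j, by omega⟩, rfl⟩
    have ih := ih (by omega)
    rw [decSum_bound_succ, decSum_bound_succ, hY, ih]
    cases m with
    | zero => simp only [decSum_length_zero, one_mul]; abel
    | succ m =>
      have hB : decSum B l (m + 1) * B l =
          decSum A l (m + 1) * B l + decSum A l m * (A l * Y l + A l * B l) := by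
        rw [ih, add_mul, mul_assoc, hYB]
      have hA' : decSum A (l + 1) (m + 1) * (Y l + (B l - A l)) =
          decSum A l (m + 1) * (Y l + (B l - A l)) +
            decSum A l m * (A l * Y l + A l * B l - A l * A l) := by
        rw [decSum_bound_succ]
        noncomm_ring
      rw [hB, hA', hA]
      noncomm_ring

lemma decSum_labelOp_succ (κ : Fin N) (m : ℕ) :
    decSum (labelOp (κ + 1)) N (m + 1) =
      decSum (labelOp κ) N (m + 1) + decSum (labelOp κ) N m * monkOp κ := by
  rw [← partialMonkOp_size κ]
  exact decSum_succ_of_increment (partialMonkOp_zero κ) (partialMonkOp_succ κ)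
    (partialMonkOp_mul_labelOp_succ κ) (labelOp_mul_self κ) le_rfl m

end DecreasingWords

section Length

variable {N : ℕ} {w : Perm (Fin N)} {a b i j : Fin N}

lemma len_eq_sum (w : Perm (Fin N)) :
    (len w : ℤ) = ∑ x, ∑ y, if x < y ∧ w y < w x then 1 else 0 := by
  simp only [len, Finset.card_filter, ← Fintype.sum_prod_type', Nat.cast_sum, Nat.cast_ite,
    Nat.cast_one, Nat.cast_zero]

lemma len_mul_swap_eq_sum (w : Perm (Fin N)) (a b : Fin N) :
    (len (w * swap a b) : ℤ) =
      ∑ x, ∑ y, if swap a b x < swap a b y ∧ w y < w x then 1 else 0 := by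
  rw [len_eq_sum, ← Equiv.sum_comp (swap a b)]
  refine Finset.sum_congr rfl fun x _ => ?_
  rw [← Equiv.sum_comp (swap a b)]
  simp

lemma inversion_swap_indicator (hab : a < b) (hw : w a < w b) (x y : Fin N) :
    (if swap a b x < swap a b y ∧ w y < w x then (1 : ℤ) else 0) =
      (if x < y ∧ w y < w x then 1 else 0) + (if x = b then if y = a then 1 else 0 else 0)
      - (if x = a then if a < y ∧ y < b ∧ w y < w a then 1 else 0 else 0)
      + (if x = b then if a < y ∧ y < b ∧ w y < w b then 1 else 0 else 0)
      + (if y = a then if a < x ∧ x < b ∧ w a < w x then 1 else 0 else 0)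
      - (if y = b then if a < x ∧ x < b ∧ w b < w x then 1 else 0 else 0) := by
  by_cases hxa : x = a <;> by_cases hxb : x = b <;> by_cases hya : y = a <;>
    by_cases hyb : y = b <;> simp only [swap_apply_def] <;> grind

lemma len_mul_swap (hab : a < b) (hw : w a < w b) :
    (len (w * swap a b) : ℤ) = len w + 1 +
      2 * ∑ c, if a < c ∧ c < b ∧ w a < w c ∧ w c < w b then 1 else 0 := by
  have hbetween (c : Fin N) :
      2 * (if a < c ∧ c < b ∧ w a < w c ∧ w c < w b then 1 else 0 : ℤ) =
        (if a < c ∧ c < b ∧ w c < w b then 1 else 0)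
        - (if a < c ∧ c < b ∧ w c < w a then 1 else 0)
        + (if a < c ∧ c < b ∧ w a < w c then 1 else 0)
        - (if a < c ∧ c < b ∧ w b < w c then 1 else 0) := by
    have hinj := w.injective
    grind
  rw [len_mul_swap_eq_sum, len_eq_sum, Finset.mul_sum]
  simp only [inversion_swap_indicator hab hw, hbetween, Finset.sum_add_distrib,
    Finset.sum_sub_distrib, Finset.sum_ite_eq', Finset.sum_ite_irrel, Finset.sum_const_zero,
    Finset.mem_univ, if_true]
  ring

lemma len_mul_swap_eq_iff (hab : a < b) : len (w * swap a b) = len w + 1 ↔ IsCover w a b := by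
  have hnonneg (v : Perm (Fin N)) (c : Fin N) :
      (0 : ℤ) ≤ if a < c ∧ c < b ∧ v a < v c ∧ v c < v b then 1 else 0 := by
    positivity
  rcases lt_or_gt_of_ne (w.injective.ne hab.ne) with h | h
  · have hlen := len_mul_swap hab h
    have hiff : len (w * swap a b) = len w + 1 ↔
        ∑ c, (if a < c ∧ c < b ∧ w a < w c ∧ w c < w b then (1 : ℤ) else 0) = 0 := by omega
    rw [hiff, Finset.sum_eq_zero_iff_of_nonneg fun c _ => hnonneg w c]
    simp [IsCover, hab, h]
  · have hlen := len_mul_swap (w := w * swap a b) hab (by simpa using h)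
    rw [mul_swap_mul_self] at hlen
    have := Finset.sum_nonneg fun c (_ : c ∈ Finset.univ) => hnonneg (w * swap a b) c
    exact iff_of_false (by omega) fun hc => hc.2.1.not_gt h

lemma len_mul_swap_adjacent (hij : (j : ℕ) = i + 1) (h : w j < w i) :
    len (w * swap i j) + 1 = len w := by
  have hlt : i < j := by omega
  have := (len_mul_swap_eq_iff (w := w * swap i j) hlt).2
    ⟨hlt, by simpa using h, fun c h₁ h₂ => by omega⟩
  rw [mul_swap_mul_self] at this
  exact this.symm

lemma len_le (w : Perm (Fin N)) : len w ≤ N * N :=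
  (Finset.card_le_univ _).trans (by simp)

lemma exists_adjacent_descent (h : w ≠ 1) : ∃ i j : Fin N, (j : ℕ) = i + 1 ∧ w j < w i := by
  by_contra! hc
  refine h ?_
  have hmono : StrictMono w := by
    rcases N with _ | N
    · exact fun a => a.elim0
    · exact Fin.strictMono_iff_lt_succ.2 fun i =>
        (hc i.castSucc i.succ (by simp)).lt_of_ne (w.injective.ne Fin.castSucc_lt_succ.ne)
  have hrefl : hmono.orderIsoOfSurjective w w.surjective = OrderIso.refl _ := Subsingleton.elim _ _
  exact Equiv.ext fun x => DFunLike.congr_fun hrefl x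

end Length

section DividedDifference

variable {σ R : Type*} [CommRing R] {i j k l : σ}

lemma X_sub_X_ne_zero [Nontrivial R] (h : i ≠ j) : (X i - X j : MvPolynomial σ R) ≠ 0 :=
  sub_ne_zero.2 fun h' => h (X_injective h')

variable [DecidableEq σ]

lemma X_sub_X_dvd_sub_rename_swap (i j : σ) (f : MvPolynomial σ R) :
    X i - X j ∣ f - rename (swap i j) f := by
  induction f using MvPolynomial.induction_on with
  | C a => simp
  | add f g hf hg =>
    rw [map_add, add_sub_add_comm]
    exact dvd_add hf hg
  | mul_X f l hf =>
    rw [show f * X l - rename (swap i j) (f * X l) = (f - rename (swap i j) f) * X l +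
      rename (swap i j) f * (X l - X (swap i j l)) by rw [map_mul, rename_X]; ring]
    refine dvd_add (hf.mul_right _) (Dvd.dvd.mul_left ?_ _)
    rcases eq_or_ne l i with rfl | hi
    · simp
    rcases eq_or_ne l j with rfl | hj
    · exact ⟨-1, by rw [swap_apply_right]; ring⟩
    · simp [swap_apply_of_ne_of_ne hi hj]

variable [IsDomain R] {f g : MvPolynomial σ R}

/-- The divided difference operator `f ↦ (f - (i j) • f) / (xᵢ - xⱼ)` for arbitrary variables
`i ≠ j`; it is zero for `i = j`. -/
noncomputable def dividedDiff (i j : σ) : MvPolynomial σ R →ₗ[R] MvPolynomial σ R where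
  toFun f := if i = j then 0 else (X_sub_X_dvd_sub_rename_swap i j f).choose
  map_add' f g := by
    split_ifs with h
    · rw [add_zero]
    refine mul_left_cancel₀ (X_sub_X_ne_zero h) ?_
    rw [mul_add, ← (X_sub_X_dvd_sub_rename_swap i j (f + g)).choose_spec,
      ← (X_sub_X_dvd_sub_rename_swap i j f).choose_spec,
      ← (X_sub_X_dvd_sub_rename_swap i j g).choose_spec, map_add]
    ring
  map_smul' c f := by
    split_ifs with h
    · rw [smul_zero]
    refine mul_left_cancel₀ (X_sub_X_ne_zero h) ?_
    rw [mul_smul_comm, ← (X_sub_X_dvd_sub_rename_swap i j (c • f)).choose_spec,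
      ← (X_sub_X_dvd_sub_rename_swap i j f).choose_spec, map_smul, smul_sub, RingHom.id_apply]

lemma X_sub_X_mul_dividedDiff (i j : σ) (f : MvPolynomial σ R) :
    (X i - X j) * dividedDiff i j f = f - rename (swap i j) f := by
  rcases eq_or_ne i j with rfl | h
  · simp [dividedDiff]
  · simpa [dividedDiff, h] using (X_sub_X_dvd_sub_rename_swap i j f).choose_spec.symm

lemma dividedDiff_eq_iff (h : i ≠ j) :
    dividedDiff i j f = g ↔ (X i - X j) * g = f - rename (swap i j) f := by
  rw [← X_sub_X_mul_dividedDiff]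
  exact ⟨fun hg => by rw [hg], fun hg => (mul_left_cancel₀ (X_sub_X_ne_zero h) hg).symm⟩

lemma dividedDiff_X (h : i ≠ j) (l : σ) :
    dividedDiff i j (X l : MvPolynomial σ R) =
      (if l = i then 1 else 0) - if l = j then 1 else 0 := by
  rw [dividedDiff_eq_iff h, rename_X]
  rcases eq_or_ne l i with rfl | hi
  · simp [h]
  rcases eq_or_ne l j with rfl | hj
  · simp [h.symm]
  · simp [hi, hj, swap_apply_of_ne_of_ne hi hj]

lemma dividedDiff_mul (h : i ≠ j) (f g : MvPolynomial σ R) :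
    dividedDiff i j (f * g) =
      dividedDiff i j f * g + rename (swap i j) f * dividedDiff i j g := by
  rw [dividedDiff_eq_iff h, map_mul]
  linear_combination g * X_sub_X_mul_dividedDiff i j f +
    rename (swap i j) f * X_sub_X_mul_dividedDiff i j g

lemma dividedDiff_eq_zero (h : i ≠ j) (hf : rename (swap i j) f = f) : dividedDiff i j f = 0 := by
  rw [dividedDiff_eq_iff h, hf, mul_zero, sub_self]

lemma dividedDiff_mul_of_rename_eq (h : i ≠ j) (hf : rename (swap i j) f = f)
    (g : MvPolynomial σ R) : dividedDiff i j (f * g) = f * dividedDiff i j g := by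
  rw [dividedDiff_mul h, dividedDiff_eq_zero h hf, hf, zero_mul, zero_add]

lemma rename_dividedDiff (h : i ≠ j) (f : MvPolynomial σ R) :
    rename (swap i j) (dividedDiff i j f) = dividedDiff i j f := by
  have hspec := congrArg (rename (swap i j)) (X_sub_X_mul_dividedDiff i j f)
  have hinv : rename (swap i j) (rename (swap i j) f) = f := by
    simp [rename_rename, ← Perm.coe_mul]
  rw [map_mul, map_sub, map_sub, hinv, rename_X, rename_X, swap_apply_left,
    swap_apply_right] at hspec
  rw [eq_comm, dividedDiff_eq_iff h]
  linear_combination -hspec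

lemma dividedDiff_dividedDiff (h : i ≠ j) (f : MvPolynomial σ R) :
    dividedDiff i j (dividedDiff i j f) = 0 :=
  dividedDiff_eq_zero h (rename_dividedDiff h f)

lemma dividedDiff_symm (h : i ≠ j) (f : MvPolynomial σ R) :
    dividedDiff j i f = -dividedDiff i j f := by
  rw [dividedDiff_eq_iff h.symm, swap_comm]
  linear_combination X_sub_X_mul_dividedDiff i j f

lemma swap_commute_swap (hik : i ≠ k) (hil : i ≠ l) (hjk : j ≠ k) (hjl : j ≠ l) :
    Commute (swap i j) (swap k l) :=
  Perm.Disjoint.commute fun x => by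
    simp only [swap_apply_def]
    grind

lemma dividedDiff_comm (hij : i ≠ j) (hkl : k ≠ l) (hik : i ≠ k) (hil : i ≠ l) (hjk : j ≠ k)
    (hjl : j ≠ l) (f : MvPolynomial σ R) :
    dividedDiff i j (dividedDiff k l f) = dividedDiff k l (dividedDiff i j f) := by
  have hrename :
      rename (swap i j) (dividedDiff k l f) = dividedDiff k l (rename (swap i j) f) := by
    have hspec := congrArg (rename (swap i j)) (X_sub_X_mul_dividedDiff k l f)
    rw [map_mul, map_sub, map_sub, rename_X, rename_X, swap_apply_of_ne_of_ne hik.symm hjk.symm,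
      swap_apply_of_ne_of_ne hil.symm hjl.symm, rename_rename, ← Perm.coe_mul,
      (swap_commute_swap hik hil hjk hjl).eq, Perm.coe_mul, ← rename_rename] at hspec
    rw [eq_comm, dividedDiff_eq_iff hkl, hspec]
  rw [dividedDiff_eq_iff hij, hrename, ← map_sub, ← X_sub_X_mul_dividedDiff,
    dividedDiff_mul_of_rename_eq hkl]
  simp [swap_apply_of_ne_of_ne hik hil, swap_apply_of_ne_of_ne hjk hjl]

lemma prod_X_sub_X_mul_dividedDiff (hij : i ≠ j) (hjk : j ≠ k) (hik : i ≠ k)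
    (f : MvPolynomial σ R) :
    (X i - X j) * (X j - X k) * (X i - X k) *
        dividedDiff i j (dividedDiff j k (dividedDiff i j f)) =
      f - rename (swap i j) f - rename (swap j k) f
        + rename (swap j k) (rename (swap i j) f) + rename (swap i j) (rename (swap j k) f)
        - rename (swap i j) (rename (swap j k) (rename (swap i j) f)) := by
  set f₁ := dividedDiff i j f with hf₁
  set f₂ := dividedDiff j k f₁
  have h₁ : (X i - X j) * f₁ = _ := X_sub_X_mul_dividedDiff i j f
  have h₂ : (X j - X k) * f₂ = _ := X_sub_X_mul_dividedDiff j k f₁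
  have h₃ := X_sub_X_mul_dividedDiff i j f₂
  have h₄ := congrArg (rename (swap i j)) h₂
  have h₅ := congrArg (rename (swap j k)) h₁
  have h₆ := congrArg (rename (swap i j)) h₅
  simp only [map_mul, map_sub, rename_X, swap_apply_left, swap_apply_right,
    swap_apply_of_ne_of_ne hij hik, swap_apply_of_ne_of_ne hik.symm hjk.symm,
    hf₁ ▸ rename_dividedDiff hij f] at h₄ h₅ h₆
  linear_combination (X j - X k) * (X i - X k) * h₃ + (X i - X k) * h₂ - (X j - X k) * h₄
    + h₁ - h₅ + h₆

lemma swap_braid (hij : i ≠ j) (hjk : j ≠ k) (hik : i ≠ k) :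
    swap i j * swap j k * swap i j = swap j k * swap i j * swap j k := by
  rw [swap_mul_swap_mul_swap hij hik, swap_comm i j, swap_comm j k,
    swap_mul_swap_mul_swap hjk.symm hik.symm, swap_comm]

lemma dividedDiff_braid (hij : i ≠ j) (hjk : j ≠ k) (hik : i ≠ k) (f : MvPolynomial σ R) :
    dividedDiff i j (dividedDiff j k (dividedDiff i j f)) =
      dividedDiff j k (dividedDiff i j (dividedDiff j k f)) := by
  have hrename : rename (swap i j) (rename (swap j k) (rename (swap i j) f)) =
      rename (swap j k) (rename (swap i j) (rename (swap j k) f)) := by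
    simp only [rename_rename, ← Perm.coe_mul, ← mul_assoc, swap_braid hij hjk hik]
  have hleft := prod_X_sub_X_mul_dividedDiff hij hjk hik f
  have hright := prod_X_sub_X_mul_dividedDiff hjk.symm hij.symm hik.symm f
  simp only [dividedDiff_symm hjk, dividedDiff_symm hij, map_neg, swap_comm k j,
    swap_comm j i] at hright
  refine mul_left_cancel₀ (mul_ne_zero (mul_ne_zero (X_sub_X_ne_zero hij) (X_sub_X_ne_zero hjk))
    (X_sub_X_ne_zero hik)) ?_
  linear_combination hleft - hright - hrename

end DividedDifference

section SchubertPolynomial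

variable {N : ℕ} [NeZero N] {v w : Perm (Fin N)} {i j : Fin N}

lemma pos_val_succ (i : Fin N) : pos N ((i : ℕ) + 1) = i :=
  Fin.ext (Nat.mod_eq_of_lt i.isLt)

lemma val_succ (w : Perm (Fin N)) (i : Fin N) : val w ((i : ℕ) + 1) = w i + 1 := by
  rw [val, pos_val_succ]

lemma pos_val_succ_succ (hij : (j : ℕ) = i + 1) : pos N ((i : ℕ) + 1 + 1) = j := by
  rw [← hij, pos_val_succ]

lemma val_succ_succ (w : Perm (Fin N)) (hij : (j : ℕ) = i + 1) :
    val w ((i : ℕ) + 1 + 1) = w j + 1 := by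
  rw [val, pos_val_succ_succ hij]

lemma divDiff_val_succ (hij : (j : ℕ) = i + 1) (f : MvPolynomial (Fin N) ℤ) :
    divDiff ((i : ℕ) + 1) f = dividedDiff i j f := by
  have hne : i ≠ j := Fin.ne_of_val_ne (by omega)
  have hdvd := X_sub_X_dvd_sub_rename_swap i j f
  simp only [divDiff, t, pos_val_succ, pos_val_succ_succ hij]
  rw [dif_pos hdvd]
  exact ((dividedDiff_eq_iff hne).2 hdvd.choose_spec.symm).symm

lemma redWordAux_one (fuel : ℕ) : redWordAux N fuel 1 = [] := by
  cases fuel with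
  | zero => rfl
  | succ fuel =>
    have hfind : ((List.range (N - 1)).map (· + 1)).find? (fun i : ℕ =>
        decide (val (1 : Perm (Fin N)) (i + 1) < val (1 : Perm (Fin N)) i)) = none := by
      simp only [List.find?_eq_none, List.mem_map, List.mem_range, decide_eq_true_iff]
      rintro _ ⟨l, hl, rfl⟩
      have hi := val_succ (1 : Perm (Fin N)) ⟨l, by omega⟩
      have hj := val_succ (1 : Perm (Fin N)) ⟨l + 1, by omega⟩
      simp only [Perm.one_apply] at hi hj
      omega
    rw [redWordAux, hfind]

lemma exists_redWordAux_succ (hw : w ≠ 1) : ∃ i j : Fin N, (j : ℕ) = i + 1 ∧ w j < w i ∧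
    ∀ fuel, redWordAux N (fuel + 1) w = redWordAux N fuel (w * swap i j) ++ [(i : ℕ) + 1] := by
  have hval {i j : Fin N} (hij : (j : ℕ) = i + 1) :
      val w ((i : ℕ) + 1 + 1) < val w ((i : ℕ) + 1) ↔ w j < w i := by
    rw [val_succ_succ w hij, val_succ, Nat.add_lt_add_iff_right, Fin.lt_def]
  cases hfind : ((List.range (N - 1)).map (· + 1)).find?
    (fun i : ℕ => decide (val w (i + 1) < val w i)) with
  | none =>
    obtain ⟨i, j, hij, hlt⟩ := exists_adjacent_descent hw
    rw [List.find?_eq_none] at hfind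
    exact absurd (by simpa using (hval hij).2 hlt)
      (hfind ((i : ℕ) + 1) (List.mem_map_of_mem (List.mem_range.2 (by omega))))
  | some l =>
    obtain ⟨i, hi, rfl⟩ := List.mem_map.1 (List.mem_of_find?_eq_some hfind)
    rw [List.mem_range] at hi
    lift i to Fin N using by omega
    obtain ⟨j, hij⟩ : ∃ j : Fin N, (j : ℕ) = i + 1 := ⟨⟨i + 1, by omega⟩, rfl⟩
    have hlt := List.find?_some hfind
    refine ⟨i, j, hij, (hval hij).1 (of_decide_eq_true hlt), fun fuel => ?_⟩
    rw [redWordAux, hfind]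
    simp only [t, pos_val_succ, pos_val_succ_succ hij]

lemma redWordAux_eq_of_len_le {fuel fuel' : ℕ} (h : len w ≤ fuel) (h' : len w ≤ fuel') :
    redWordAux N fuel w = redWordAux N fuel' w := by
  induction fuel generalizing fuel' w with
  | zero =>
    obtain rfl : w = 1 := by
      by_contra hw
      obtain ⟨i, j, hij, hlt⟩ := exists_adjacent_descent hw
      have := len_mul_swap_adjacent hij hlt
      omega
    rw [redWordAux_one, redWordAux_one]
  | succ fuel ih =>
    by_cases hw : w = 1
    · rw [hw, redWordAux_one, redWordAux_one]
    obtain ⟨i, j, hij, hlt, hword⟩ := exists_redWordAux_succ hw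
    have := len_mul_swap_adjacent hij hlt
    obtain ⟨fuel', rfl⟩ : ∃ m, fuel' = m + 1 := ⟨fuel' - 1, by omega⟩
    rw [hword, hword, ih (fuel' := fuel') (by omega) (by omega)]

/-- The operator `∂_v`, computed along the reduced word `redWord N v` of `v`. -/
noncomputable def permDividedDiff (v : Perm (Fin N)) (f : MvPolynomial (Fin N) ℤ) :
    MvPolynomial (Fin N) ℤ :=
  divDiffWord (redWord N v) f

@[simp]
lemma permDividedDiff_one (f : MvPolynomial (Fin N) ℤ) : permDividedDiff 1 f = f := by
  rw [permDividedDiff, redWord, redWordAux_one, divDiffWord, List.foldr_nil]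

lemma exists_permDividedDiff_eq (hv : v ≠ 1) : ∃ i j : Fin N, (j : ℕ) = i + 1 ∧ v j < v i ∧
    ∀ f, permDividedDiff v f = permDividedDiff (v * swap i j) (dividedDiff i j f) := by
  obtain ⟨i, j, hij, hlt, hword⟩ := exists_redWordAux_succ hv
  refine ⟨i, j, hij, hlt, fun f => ?_⟩
  rw [permDividedDiff, redWord,
    redWordAux_eq_of_len_le (len_le v) ((len_le v).trans (Nat.le_succ _)), hword, divDiffWord,
    List.foldr_append, List.foldr_cons, List.foldr_nil, divDiff_val_succ hij]
  rfl

/-- The inductive step of `permDividedDiff_of_descent`: two descents of `v` give the same operator.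
Depending on whether they overlap, this is a braid or a commutation relation. -/
lemma permDividedDiff_of_two_descents {a b : Fin N} (hij : (j : ℕ) = i + 1)
    (hab : (b : ℕ) = a + 1) (hlt : v j < v i) (hlt' : v b < v a)
    (ih : ∀ u : Perm (Fin N), len u < len v → ∀ {i j : Fin N}, (j : ℕ) = i + 1 → u j < u i →
      ∀ f, permDividedDiff u f = permDividedDiff (u * swap i j) (dividedDiff i j f))
    (f : MvPolynomial (Fin N) ℤ) :
    permDividedDiff (v * swap i j) (dividedDiff i j f) =
      permDividedDiff (v * swap a b) (dividedDiff a b f) := by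
  wlog hia : i ≤ a generalizing i j a b
  · exact (this hab hij hlt' hlt (le_of_not_ge hia)).symm
  have hlen := len_mul_swap_adjacent hij hlt
  have hlen' := len_mul_swap_adjacent hab hlt'
  have hne : i ≠ j := Fin.ne_of_val_ne (by omega)
  have hne' : a ≠ b := Fin.ne_of_val_ne (by omega)
  have hib : i ≠ b := Fin.ne_of_val_ne (by omega)
  rcases eq_or_ne i a with rfl | hia'
  · obtain rfl : j = b := Fin.ext (by omega)
    rfl
  rcases eq_or_ne j a with rfl | hja
  · have hfix : swap i j b = b := swap_apply_of_ne_of_ne hib.symm hne'.symm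
    have hfix' : swap j b i = i := swap_apply_of_ne_of_ne hne hib
    have hd : (v * swap i j) b < (v * swap i j) j := by simpa [hfix] using hlt'.trans hlt
    have hd' : (v * swap j b) j < (v * swap j b) i := by simpa [hfix'] using hlt'.trans hlt
    have := len_mul_swap_adjacent hab hd
    have := len_mul_swap_adjacent hij hd'
    rw [ih _ (by omega) hab hd, ih _ (by omega) hij hd',
      ih (v * swap i j * swap j b) (by omega) hij (by simpa [hfix, hfix'] using hlt'),
      ih (v * swap j b * swap i j) (by omega) hab (by simpa [hfix, hfix'] using hlt),
      dividedDiff_braid hne hne' hib]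
    simp only [mul_assoc]
    rw [← mul_assoc (swap i j), swap_braid hne hne' hib, mul_assoc]
  · have hjb : j ≠ b := Fin.ne_of_val_ne (by omega)
    rw [ih _ (by omega) hab (by simp [swap_apply_of_ne_of_ne, *, Ne.symm]),
      ih (v * swap a b) (by omega) hij (by simp [swap_apply_of_ne_of_ne, *]),
      dividedDiff_comm hne hne' hia' hib hja hjb, mul_assoc, mul_assoc,
      (swap_commute_swap hia' hib hja hjb).eq]

lemma permDividedDiff_of_descent (hij : (j : ℕ) = i + 1) (hlt : v j < v i)
    (f : MvPolynomial (Fin N) ℤ) :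
    permDividedDiff v f = permDividedDiff (v * swap i j) (dividedDiff i j f) := by
  induction hn : len v using Nat.strong_induction_on generalizing v i j f with
  | _ n ih =>
    obtain ⟨a, b, hab, hlt', hv⟩ := exists_permDividedDiff_eq (v := v) (by
      rintro rfl
      exact absurd hlt (by simp; omega))
    rw [hv]
    exact permDividedDiff_of_two_descents hab hij hlt' hlt
      (fun u hu _ _ hij hlt f => ih _ (hn ▸ hu) hij hlt f rfl) f

lemma dividedDiff_permDividedDiff_of_lt (hij : (j : ℕ) = i + 1) (h : v.symm i < v.symm j)
    (f : MvPolynomial (Fin N) ℤ) :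
    dividedDiff i j (permDividedDiff v f) = permDividedDiff (swap i j * v) f := by
  induction hn : len v using Nat.strong_induction_on generalizing v f with
  | _ n ih =>
    by_cases hv : v = 1
    · rw [hv, permDividedDiff_one, permDividedDiff_of_descent (v := swap i j * 1) hij
        (by simp; omega)]
      simp
    obtain ⟨a, b, hab, hlt⟩ := exists_adjacent_descent hv
    have hlen := len_mul_swap_adjacent hab hlt
    rw [permDividedDiff_of_descent hab hlt, ih _ (by omega) _ _ rfl,
      permDividedDiff_of_descent (v := swap i j * v) hab, mul_assoc]
    · have := v.symm_apply_apply a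
      have := v.symm_apply_apply b
      simp only [Perm.mul_apply, swap_apply_def]
      grind
    · have := v.apply_symm_apply i
      have := v.apply_symm_apply j
      change swap a b (v.symm i) < swap a b (v.symm j)
      simp only [swap_apply_def]
      grind

lemma dividedDiff_permDividedDiff (hij : (j : ℕ) = i + 1) (v : Perm (Fin N))
    (f : MvPolynomial (Fin N) ℤ) :
    dividedDiff i j (permDividedDiff v f) =
      if v.symm i < v.symm j then permDividedDiff (swap i j * v) f else 0 := by
  have hne : i ≠ j := Fin.ne_of_val_ne (by omega)
  split_ifs with h
  · exact dividedDiff_permDividedDiff_of_lt hij h f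
  · have hlt : (swap i j * v).symm i < (swap i j * v).symm j := by
      change v.symm (swap i j i) < v.symm (swap i j j)
      rw [swap_apply_left, swap_apply_right]
      exact lt_of_le_of_ne (not_lt.1 h) (v.symm.injective.ne hne.symm)
    have := dividedDiff_permDividedDiff_of_lt hij hlt f
    rw [swap_mul_self_mul] at this
    rw [← this, dividedDiff_dividedDiff hne]

lemma dividedDiff_schubertPoly (hij : (j : ℕ) = i + 1) (w : Perm (Fin N)) :
    dividedDiff i j (schubertPoly N w) =
      if w j < w i then schubertPoly N (w * swap i j) else 0 := by
  have hlt : (w⁻¹ * w0 N).symm i < (w⁻¹ * w0 N).symm j ↔ w j < w i := Fin.rev_lt_rev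
  have hmul : swap i j * (w⁻¹ * w0 N) = (w * swap i j)⁻¹ * w0 N := by
    rw [mul_inv_rev, swap_inv, mul_assoc]
  have h := dividedDiff_permDividedDiff hij (w⁻¹ * w0 N) (staircase N)
  simp only [hmul, hlt] at h
  exact h

lemma schubertPoly_w0 : schubertPoly N (w0 N) = staircase N := by
  have h := permDividedDiff_one (staircase N)
  rwa [← inv_mul_cancel (w0 N)] at h

end SchubertPolynomial

section Dominant

variable {N : ℕ} {w : Perm (Fin N)} {i j l : Fin N}

lemma exists_first_ascent (hw : w ≠ w0 N) : ∃ i j : Fin N, (j : ℕ) = i + 1 ∧ w i < w j ∧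
    ∀ a : Fin N, (i : ℕ) = a + 1 → w i < w a := by
  have hne : w0 N * w ≠ 1 := fun h => hw (mul_eq_one_iff_inv_eq.1 h).symm
  obtain ⟨i₀, j₀, hij₀, hlt₀⟩ := exists_adjacent_descent hne
  obtain ⟨i, ⟨j, hij, hlt⟩, hmin⟩ := WellFounded.has_min wellFounded_lt
    {i : Fin N | ∃ j : Fin N, (j : ℕ) = i + 1 ∧ w i < w j}
    ⟨i₀, j₀, hij₀, Fin.rev_lt_rev.1 hlt₀⟩
  refine ⟨i, j, hij, hlt, fun a ha => (w.injective.ne ?_).lt_or_gt.resolve_right fun h => ?_⟩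
  · exact Fin.ne_of_val_ne (by omega)
  · exact hmin a ⟨i, ha, h⟩ (by omega)

lemma ascentInduction {P : Perm (Fin N) → Prop} (w0 : P (w0 N))
    (step : ∀ (w : Perm (Fin N)) (i j : Fin N), (j : ℕ) = i + 1 → w i < w j →
      (∀ a : Fin N, (i : ℕ) = a + 1 → w i < w a) → P (w * swap i j) → P w)
    (w : Perm (Fin N)) : P w := by
  induction hn : N * N - len w using Nat.strong_induction_on generalizing w with
  | _ n ih =>
    by_cases hw : w = SchubertPieri.w0 N
    · exact hw ▸ w0
    obtain ⟨i, j, hij, hlt, hfirst⟩ := exists_first_ascent hw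
    have hlen := len_mul_swap_adjacent (w := w * swap i j) hij (by simpa using hlt)
    have hle := len_le (w * swap i j)
    rw [mul_swap_mul_self] at hlen
    exact step w i j hij hlt hfirst (ih _ (by omega) _ rfl)

/-- The Lehmer code of `w`: the number of inversions of `w` whose left position is `i`. -/
def lehmerCode (w : Perm (Fin N)) (i : Fin N) : ℕ :=
  (Finset.univ.filter fun y => i < y ∧ w y < w i).card

lemma lehmerCode_w0 (i : Fin N) : lehmerCode (w0 N) i = N - 1 - i := by
  have h : (Finset.univ.filter fun y => i < y ∧ w0 N y < w0 N i) = Finset.Ioi i := by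
    ext y
    simp only [Finset.mem_filter_univ, Finset.mem_Ioi]
    exact and_iff_left_of_imp Fin.rev_lt_rev.2
  rw [lehmerCode, h, Fin.card_Ioi]

lemma lehmerCode_one (i : Fin N) : lehmerCode 1 i = 0 :=
  Finset.card_eq_zero.2 (Finset.filter_false_of_mem fun _ _ h => h.1.asymm h.2)

lemma lehmerCode_lt (hij : i < j) (h : w j < w i) : lehmerCode w j < lehmerCode w i := by
  refine Finset.card_lt_card (Finset.ssubset_iff_of_subset ?_ |>.2 ⟨j, by simp [hij, h], by simp⟩)
  intro y
  simp only [Finset.mem_filter_univ]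
  exact fun hy => ⟨hij.trans hy.1, hy.2.trans h⟩

lemma lehmerCode_le_of_adjacent (hij : (j : ℕ) = i + 1) (h : w i < w j) :
    lehmerCode w i ≤ lehmerCode w j := by
  refine Finset.card_le_card fun y => ?_
  simp only [Finset.mem_filter_univ]
  grind

lemma lehmerCode_mul_swap_adjacent (hij : (j : ℕ) = i + 1) (h : w i < w j) (l : Fin N) :
    lehmerCode (w * swap i j) l =
      if l = i then lehmerCode w j + 1 else if l = j then lehmerCode w i else lehmerCode w l := by
  split_ifs with hli hlj
  · subst hli
    rw [lehmerCode, lehmerCode, ← Finset.card_insert_of_notMem (a := j) (by simp)]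
    congr 1
    ext y
    simp only [Finset.mem_filter_univ, Finset.mem_insert, Perm.mul_apply, swap_apply_def]
    grind
  · subst hlj
    refine congrArg Finset.card (Finset.filter_congr fun y _ => ?_)
    simp only [Perm.mul_apply, swap_apply_def]
    grind
  · refine Finset.card_equiv (swap i j) fun y => ?_
    simp only [Finset.mem_filter_univ, Perm.mul_apply, swap_apply_of_ne_of_ne hli hlj]
    exact and_congr_left' (by grind)

variable [NeZero N]

lemma schubertPoly_eq_prod_of_lehmerCode
    (hcode : ∀ a b : Fin N, (b : ℕ) = a + 1 → lehmerCode w b ≤ lehmerCode w a) :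
    schubertPoly N w = ∏ l, X l ^ lehmerCode w l := by
  induction w using ascentInduction with
  | w0 => simp only [schubertPoly_w0, staircase, lehmerCode_w0]
  | step w i j hij hlt hfirst ih =>
    have hne : i ≠ j := Fin.ne_of_val_ne (by omega)
    have heq : lehmerCode w i = lehmerCode w j :=
      (lehmerCode_le_of_adjacent hij hlt).antisymm (hcode i j hij)
    have hswap (l) : lehmerCode (w * swap i j) l = lehmerCode w l + if l = i then 1 else 0 := by
      rw [lehmerCode_mul_swap_adjacent hij hlt]
      grind
    have hprod : schubertPoly N (w * swap i j) = X i * ∏ l, X l ^ lehmerCode w l := by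
      rw [ih fun a b hab => ?_]
      · simp only [hswap, pow_add, Finset.prod_mul_distrib, pow_ite, pow_one, pow_zero,
          Finset.prod_ite_eq', Finset.mem_univ, if_true, mul_comm]
      · have := hcode a b hab
        have hlt' : b = i → lehmerCode w b < lehmerCode w a := by
          rintro rfl
          exact lehmerCode_lt (by omega) (hfirst a hab)
        rw [hswap, hswap]
        grind
    have hsymm : rename (swap i j) (∏ l, X l ^ lehmerCode w l : MvPolynomial (Fin N) ℤ) =
        ∏ l, X l ^ lehmerCode w l := by
      simp only [map_prod, map_pow, rename_X]
      refine Fintype.prod_equiv (swap i j) _ _ fun l => ?_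
      congr 1
      grind
    have h := dividedDiff_schubertPoly hij (w * swap i j)
    rw [hprod, mul_comm, dividedDiff_mul_of_rename_eq hne hsymm, dividedDiff_X hne] at h
    simpa [hne, hlt] using h.symm

lemma schubertPoly_one : schubertPoly N 1 = 1 := by
  simp [schubertPoly_eq_prod_of_lehmerCode, lehmerCode_one]

end Dominant

section CoinvariantRing

variable {N : ℕ}

lemma esymm_mem_symIdeal {m : ℕ} (hm : m ≠ 0) : esymm (Fin N) ℤ m ∈ symIdeal N := by
  refine Ideal.subset_span ⟨esymm_isSymmetric _ _ _, ?_⟩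
  rw [esymm, map_sum]
  refine Finset.sum_eq_zero fun s hs => ?_
  simp [(Finset.mem_powersetCard.1 hs).2, hm]

lemma dividedDiff_mem_symIdeal {i j : Fin N} (h : i ≠ j) {f : MvPolynomial (Fin N) ℤ}
    (hf : f ∈ symIdeal N) : dividedDiff i j f ∈ symIdeal N := by
  induction hf using Submodule.span_induction with
  | mem f hf => rw [dividedDiff_eq_zero h (hf.1 _)]; exact zero_mem _
  | zero => rw [map_zero]; exact zero_mem _
  | add f g _ _ hf hg => rw [map_add]; exact add_mem hf hg
  | smul a f hf' hf =>
    rw [smul_eq_mul, dividedDiff_mul h]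
    exact add_mem (Ideal.mul_mem_left _ _ hf') (Ideal.mul_mem_left _ _ hf)

/-- The class in `HRing N` of the variable `X i`. -/
noncomputable def xClass (i : Fin N) : HRing N := Ideal.Quotient.mk (symIdeal N) (X i)

lemma prod_X_add_C_xClass :
    ∏ i : Fin N, (Polynomial.X + Polynomial.C (xClass i)) = Polynomial.X ^ N := by
  have h := congrArg (Polynomial.map (Ideal.Quotient.mk (symIdeal N)))
    (prod_C_add_X_eq_sum_esymm (σ := Fin N) (R := ℤ))
  rw [Polynomial.map_prod, Polynomial.map_sum, Fintype.card_fin,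
    Finset.sum_eq_single_of_mem 0 (by simp) fun m _ hm => ?_] at h
  · simpa [xClass] using h
  · have hmem := Ideal.Quotient.eq_zero_iff_mem.2 (esymm_mem_symIdeal (N := N) hm)
    rw [Polynomial.map_mul, Polynomial.map_C, hmem, map_zero, zero_mul]

section

variable {R ι : Type*} [CommRing R] {M : R} {x : ι → R} {s : Finset ι}

lemma C_mul_prod_X_add_C (h : ∀ i ∈ s, M * x i = 0) :
    Polynomial.C M * ∏ i ∈ s, (Polynomial.X + Polynomial.C (x i)) =
      Polynomial.C M * Polynomial.X ^ s.card := by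
  induction s using Finset.induction_on with
  | empty => simp
  | insert a s ha ih =>
    have hM : Polynomial.C M * Polynomial.C (x a) = 0 := by
      rw [← map_mul, h a (Finset.mem_insert_self a s), map_zero]
    rw [Finset.prod_insert ha, Finset.card_insert_of_notMem ha, mul_left_comm,
      ih fun i hi => h i (Finset.mem_insert_of_mem hi)]
    linear_combination Polynomial.X ^ s.card * hM

lemma mul_pow_eq_zero_of_prod_X_add_C [Fintype ι]
    (hx : ∏ i, (Polynomial.X + Polynomial.C (x i)) = Polynomial.X ^ Fintype.card ι)
    (h : ∀ i ∈ s, M * x i = 0) {j : ι} (hj : j ∉ s) :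
    M * x j ^ (Fintype.card ι - s.card) = 0 := by
  have hprod : Polynomial.X ^ s.card *
      (Polynomial.C M * ∏ i ∈ sᶜ, (Polynomial.X + Polynomial.C (x i))) =
      Polynomial.X ^ s.card * (Polynomial.C M * Polynomial.X ^ (Fintype.card ι - s.card)) := by
    rw [mul_left_comm _ (Polynomial.C M) (Polynomial.X ^ _), ← pow_add,
      Nat.add_sub_cancel' (Finset.card_le_univ s), ← hx, ← Finset.prod_mul_prod_compl s,
      ← mul_assoc (Polynomial.C M), C_mul_prod_X_add_C h]
    ring
  have heval := congrArg (Polynomial.eval (-x j))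
    ((Polynomial.monic_X_pow (R := R) s.card).isRegular.left hprod)
  rw [Polynomial.eval_mul, Polynomial.eval_prod,
    Finset.prod_eq_zero (Finset.mem_compl.2 hj) (by simp)] at heval
  rw [mul_zero, Polynomial.eval_mul, Polynomial.eval_C, Polynomial.eval_X_pow, neg_pow,
    mul_left_comm, eq_comm, neg_one_pow_mul_eq_zero_iff] at heval
  exact heval

end

lemma xClass_mul_prod_pow_eq_zero (j : Fin N) {s : Finset (Fin N)} (hs : Finset.Iic j ⊆ s) :
    xClass j * ∏ i ∈ s, xClass i ^ (N - 1 - (i : ℕ)) = 0 := by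
  induction j using WellFoundedLT.induction generalizing s with
  | _ j ih =>
    have hkill : ∀ i ∈ Finset.Iio j,
        (∏ l ∈ Finset.Iio j, xClass l ^ (N - 1 - (l : ℕ))) * xClass i = 0 := fun i hi => by
      rw [mul_comm]
      exact ih i (Finset.mem_Iio.1 hi)
        fun l hl => Finset.mem_Iio.2 ((Finset.mem_Iic.1 hl).trans_lt (Finset.mem_Iio.1 hi))
    have h := mul_pow_eq_zero_of_prod_X_add_C (by rw [prod_X_add_C_xClass, Fintype.card_fin]) hkill
      Finset.notMem_Iio_self
    rw [Fintype.card_fin, Fin.card_Iio, show N - (j : ℕ) = (N - 1 - (j : ℕ)) + 1 by omega,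
      pow_succ] at h
    rw [← Finset.prod_sdiff hs, ← Finset.Iio_insert, Finset.prod_insert Finset.notMem_Iio_self]
    linear_combination
      (∏ i ∈ s \ insert j (Finset.Iio j), xClass i ^ (N - 1 - (i : ℕ))) * h

lemma X_mul_staircase_mem_symIdeal (j : Fin N) : X j * staircase N ∈ symIdeal N := by
  rw [← Ideal.Quotient.eq_zero_iff_mem, map_mul, staircase, map_prod]
  simp only [map_pow]
  exact xClass_mul_prod_pow_eq_zero j (Finset.subset_univ _)

end CoinvariantRing

section MonkRule

variable {N : ℕ}

lemma monkOp_w0 (l : Fin N) : monkOp l (basisVec (w0 N)) = 0 := by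
  have h (a b : Fin N) : coverOp a b (basisVec (w0 N)) = 0 := by
    rw [coverOp_basisVec, if_neg]
    exact fun hc => hc.1.asymm (Fin.rev_lt_rev.1 hc.2.1)
  simp [monkOp, h]

variable [NeZero N]

/-- The linear extension of `w ↦ schubertPoly N w`. -/
noncomputable def schubertSum : PermModule N →ₗ[ℤ] MvPolynomial (Fin N) ℤ :=
  Finsupp.linearCombination ℤ (schubertPoly N)

@[simp]
lemma schubertSum_basisVec (w : Perm (Fin N)) : schubertSum (basisVec w) = schubertPoly N w := by
  simp [schubertSum]

lemma dividedDiff_schubertSum {i j : Fin N} (hij : (j : ℕ) = i + 1) (v : PermModule N) :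
    dividedDiff i j (schubertSum v) = schubertSum (descentOp i j v) := by
  have h : dividedDiff i j ∘ₗ schubertSum = schubertSum ∘ₗ descentOp i j :=
    PermModule.hom_ext fun w => by
      simp only [LinearMap.comp_apply, schubertSum_basisVec, dividedDiff_schubertPoly hij,
        descentOp_basisVec, apply_ite schubertSum, map_zero]
  exact LinearMap.congr_fun h v

/-- Monk's rule. The divided differences satisfy the same commutation rule with multiplication by a
variable as `descentOp` with `monkOp`, which reduces the claim to `w0`. -/
lemma X_mul_schubertPoly_sub_mem_symIdeal (w : Perm (Fin N)) (l : Fin N) :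
    X l * schubertPoly N w - schubertSum (monkOp l (basisVec w)) ∈ symIdeal N := by
  induction w using ascentInduction generalizing l with
  | w0 =>
    rw [monkOp_w0, map_zero, sub_zero, schubertPoly_w0]
    exact X_mul_staircase_mem_symIdeal l
  | step w i j hij hlt _ ih =>
    have hne : i ≠ j := Fin.ne_of_val_ne (by omega)
    have hdesc : descentOp i j (basisVec (w * swap i j)) = basisVec w := by simp [hlt]
    have hpoly : dividedDiff i j (schubertPoly N (w * swap i j)) = schubertPoly N w := by
      simpa only [hdesc, schubertSum_basisVec] using
        dividedDiff_schubertSum hij (basisVec (w * swap i j))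
    have hcomm := LinearMap.congr_fun (descentOp_mul_monkOp hij (swap i j l))
      (basisVec (w * swap i j))
    rw [Module.End.mul_apply, LinearMap.add_apply, Module.End.mul_apply, hdesc,
      swap_apply_self] at hcomm
    have h := dividedDiff_mem_symIdeal hne (ih (swap i j l))
    rw [map_sub, dividedDiff_schubertSum hij, hcomm, dividedDiff_mul hne, hpoly,
      dividedDiff_X hne, rename_X, swap_apply_self, map_add] at h
    convert h using 1
    split_ifs <;> simp only [LinearMap.sub_apply, Module.End.one_apply, LinearMap.zero_apply,
      map_sub, map_zero, schubertSum_basisVec] <;> ring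

/-- The linear extension of `w ↦ SS N w`. -/
noncomputable def schubertMap : PermModule N →ₗ[ℤ] HRing N :=
  Finsupp.linearCombination ℤ (SS N)

@[simp]
lemma schubertMap_basisVec (w : Perm (Fin N)) : schubertMap (basisVec w) = SS N w := by
  simp [schubertMap]

lemma schubertMap_apply (v : PermModule N) :
    schubertMap v = Ideal.Quotient.mk (symIdeal N) (schubertSum v) := by
  have h : schubertMap = (Ideal.Quotient.mkₐ ℤ (symIdeal N)).toLinearMap ∘ₗ schubertSum :=
    PermModule.hom_ext fun w => by
      rw [LinearMap.comp_apply, schubertMap_basisVec, schubertSum_basisVec]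
      rfl
  rw [h]
  rfl

/-- On Schubert classes, the operator `T` is multiplication by `r`. -/
def IsMulBy (T : Module.End ℤ (PermModule N)) (r : HRing N) : Prop :=
  ∀ v, schubertMap (T v) = r * schubertMap v

lemma isMulBy_of_basisVec {T : Module.End ℤ (PermModule N)} {r : HRing N}
    (h : ∀ w, schubertMap (T (basisVec w)) = r * SS N w) : IsMulBy T r := by
  have heq : schubertMap ∘ₗ T = LinearMap.mulLeft ℤ r ∘ₗ schubertMap :=
    PermModule.hom_ext fun w => by
      rw [LinearMap.comp_apply, h, LinearMap.comp_apply, schubertMap_basisVec,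
        LinearMap.mulLeft_apply]
  exact LinearMap.congr_fun heq

lemma isMulBy_monkOp (l : Fin N) : IsMulBy (monkOp l) (xClass l) :=
  isMulBy_of_basisVec fun w => by
    rw [schubertMap_apply, xClass, SS, ← map_mul, eq_comm, Ideal.Quotient.eq]
    exact X_mul_schubertPoly_sub_mem_symIdeal w l

namespace IsMulBy

variable {T T' : Module.End ℤ (PermModule N)} {r r' : HRing N}

lemma zero : IsMulBy (0 : Module.End ℤ (PermModule N)) 0 := fun v => by simp

lemma one : IsMulBy (1 : Module.End ℤ (PermModule N)) 1 := fun v => by simp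

lemma add (h : IsMulBy T r) (h' : IsMulBy T' r') : IsMulBy (T + T') (r + r') := fun v => by
  rw [LinearMap.add_apply, map_add, h, h', add_mul]

lemma sub (h : IsMulBy T r) (h' : IsMulBy T' r') : IsMulBy (T - T') (r - r') := fun v => by
  rw [LinearMap.sub_apply, map_sub, h, h', sub_mul]

lemma mul (h : IsMulBy T r) (h' : IsMulBy T' r') : IsMulBy (T * T') (r * r') := fun v => by
  rw [Module.End.mul_apply, h, h', mul_assoc]

end IsMulBy

end MonkRule

section HookSums

variable {N : ℕ} [NeZero N] {k : ℕ}

lemma exists_isMulBy_decSum (hk : k ≤ N) (m : ℕ) :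
    ∃ r, IsMulBy (decSum (labelOp (N := N) k) N m) r := by
  induction k generalizing m with
  | zero =>
    cases m with
    | zero => exact ⟨1, by rw [decSum_length_zero]; exact .one⟩
    | succ m =>
      refine ⟨0, ?_⟩
      have h : decSum (labelOp (N := N) 0) N (m + 1) = 0 :=
        Finset.sum_eq_zero fun L _ => by simp [wordOp_succ, labelOp_zero]
      rw [h]
      exact .zero
  | succ k ih =>
    cases m with
    | zero => exact ⟨1, by rw [decSum_length_zero]; exact .one⟩
    | succ m =>
      obtain ⟨r₁, h₁⟩ := ih (by omega) (m + 1)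
      obtain ⟨r₂, h₂⟩ := ih (by omega) m
      exact ⟨_, decSum_labelOp_succ (⟨k, hk⟩ : Fin N) m ▸ h₁.add (h₂.mul (isMulBy_monkOp _))⟩

lemma exists_isMulBy_hookSum_lt_zero (hk : k ≤ N) (m : ℕ) :
    ∃ r, IsMulBy (hookSum (labelOp (N := N) k) (· < ·) m 0) r :=
  hookSum_lt_zero (labelOp (N := N) k) m ▸ exists_isMulBy_decSum hk m

lemma exists_isMulBy_hookSum_gt_zero (hk : k ≤ N) (m : ℕ) :
    ∃ r, IsMulBy (hookSum (labelOp (N := N) k) (· > ·) m 0) r := by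
  induction m using Nat.strong_induction_on with
  | _ m ih =>
    rcases Nat.eq_zero_or_pos m with rfl | hm
    · exact ⟨1, by rw [hookSum_length_zero]; exact .one⟩
    have hself (j : ℕ) : ∃ r, IsMulBy (hookSum (labelOp (N := N) k) (· > ·) j j) r :=
      hookSum_swap_self (labelOp (N := N) k) (· < ·) j ▸ exists_isMulBy_hookSum_lt_zero hk j
    have hall (j : ℕ) (hj : 1 ≤ j) (hjm : j ≤ m) :
        ∃ r, IsMulBy (hookSum (labelOp (N := N) k) (· > ·) m j) r := by
      induction hjm using Nat.decreasingInduction with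
      | self => exact hself m
      | of_succ j hjm h =>
        obtain ⟨r, hr⟩ := h (by omega)
        obtain ⟨r₁, h₁⟩ := ih (m - j) (by omega)
        obtain ⟨r₂, h₂⟩ := hself j
        have hsum := hookSum_zero_mul_hookSum_self (r := (· > ·)) (labelOp_mul_self (N := N) k) hj
          (q := m - j) (by omega)
        rw [show j + (m - j) = m by omega, ← sub_eq_iff_eq_add] at hsum
        exact ⟨_, hsum ▸ (h₁.mul h₂).sub hr⟩
    exact hookSum_one (labelOp (N := N) k) (· > ·) m ▸ hall 1 le_rfl hm

lemma exists_isMulBy_hookSum (hk : k ≤ N) {p q : ℕ} (hp : 1 ≤ p) (hq : 1 ≤ q) :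
    ∃ r, IsMulBy (hookSum (labelOp (N := N) k) (· < ·) (p + q - 1) p) r ∧
      IsMulBy (hookSum (labelOp (N := N) k) (· > ·) (p + q - 1) q) r := by
  have hinc (m : ℕ) : hookSum (labelOp (N := N) k) (· < ·) m m =
      hookSum (labelOp k) (· > ·) m 0 := hookSum_swap_self (labelOp k) (· > ·) m
  have hdec (m : ℕ) : hookSum (labelOp (N := N) k) (· > ·) m m =
      hookSum (labelOp k) (· < ·) m 0 := hookSum_swap_self (labelOp k) (· < ·) m
  induction q, hq using Nat.le_induction generalizing p with
  | base =>
    obtain ⟨r, h⟩ := exists_isMulBy_hookSum_gt_zero (N := N) hk p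
    rw [Nat.add_sub_cancel, hinc, hookSum_one]
    exact ⟨r, h, h⟩
  | succ q hq ih =>
    obtain ⟨r, h₁, h₂⟩ := ih (p := p + 1) (by omega)
    obtain ⟨ri, hi⟩ := exists_isMulBy_hookSum_gt_zero (N := N) hk p
    obtain ⟨rd, hd⟩ := exists_isMulBy_hookSum_lt_zero (N := N) hk q
    have hlt := hookSum_zero_mul_hookSum_self (r := (· < ·)) (labelOp_mul_self (N := N) k) hp hq
    have hgt := hookSum_zero_mul_hookSum_self (r := (· > ·)) (labelOp_mul_self (N := N) k) hq hp
    rw [hinc, ← sub_eq_iff_eq_add] at hlt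
    rw [hdec, ← sub_eq_iff_eq_add', add_comm q p] at hgt
    rw [show p + 1 + q - 1 = p + q by omega] at h₁ h₂
    rw [← add_assoc, Nat.add_sub_cancel, ← hlt, ← hgt]
    exact ⟨rd * ri - r, (hd.mul hi).sub h₁, mul_comm rd ri ▸ (hi.mul hd).sub h₂⟩

end HookSums

section HookPerm

variable {N : ℕ} [NeZero N] {k p q : ℕ}

lemma pos_val_add_one {j : ℕ} (hj : 1 ≤ j) (hjN : j ≤ N) : (pos N j : ℕ) + 1 = j := by
  simp only [pos]
  rw [Nat.mod_eq_of_lt (by omega), Nat.sub_add_cancel hj]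

lemma t_apply_val {a b : ℕ} (ha : 1 ≤ a) (haN : a ≤ N) (hb : 1 ≤ b) (hbN : b ≤ N) (x : Fin N) :
    (t N a b x : ℕ) =
      if (x : ℕ) + 1 = a then b - 1 else if (x : ℕ) + 1 = b then a - 1 else x := by
  have ha := pos_val_add_one ha haN
  have hb := pos_val_add_one hb hbN
  grind [t]

lemma cycleList_cons_cons (a b : ℕ) (l : List ℕ) :
    cycleList N (a :: b :: l) = t N a b * cycleList N (b :: l) := by
  simp [cycleList]

lemma cycleList_reverse_range_val (hp : 1 ≤ p) (hkp : k + p ≤ N) (x : Fin N) :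
    (cycleList N ((List.range p).reverse.map (k + 1 + ·)) x : ℕ) =
      if (x : ℕ) < k ∨ k + p ≤ x then (x : ℕ) else if (x : ℕ) = k then k + p - 1 else x - 1 := by
  induction p, hp using Nat.le_induction with
  | base =>
    simp [cycleList]
    grind
  | succ p hp ih =>
    obtain ⟨p, rfl⟩ := Nat.exists_eq_add_of_le' hp
    have ih := ih (by omega)
    simp only [List.range_succ, List.reverse_append, List.reverse_singleton, List.singleton_append,
      List.map_cons] at ih ⊢
    rw [cycleList_cons_cons, Perm.mul_apply,
      t_apply_val (by omega) (by omega) (by omega) (by omega), ih]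
    grind

lemma hookPerm_arm_zero : hookPerm N k 0 1 = 1 := by
  simp [hookPerm, cycleList]

lemma hookPerm_arm_succ (hk : 1 ≤ k) :
    hookPerm N k (p + 1) 1 =
      t N k (k + 1 + p) * cycleList N ((List.range (p + 1)).reverse.map (k + 1 + ·)) := by
  rw [hookPerm, List.range_one, List.map_singleton, List.singleton_append, Nat.add_zero,
    Nat.sub_add_cancel hk, List.range_succ, List.reverse_append, List.reverse_singleton,
    List.singleton_append, List.map_cons, cycleList_cons_cons]

lemma hookPerm_leg_succ (hq : 1 ≤ q) (hqk : q + 1 ≤ k) :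
    hookPerm N k p (q + 1) = t N (k - q) (k - q + 1) * hookPerm N k p q := by
  obtain ⟨q, rfl⟩ := Nat.exists_eq_add_of_le' hq
  have hlist : (List.range (q + 1 + 1)).map (k - (q + 1 + 1) + 1 + ·) =
      (k - (q + 1)) :: (List.range (q + 1)).map (k - (q + 1) + 1 + ·) := by
    rw [List.range_succ_eq_map (n := q + 1), List.map_cons, List.map_map]
    congr 1
    · omega
    · exact List.map_congr_left fun i _ => by simp only [Function.comp_apply]; omega
  rw [hookPerm, hookPerm, hlist, List.range_succ_eq_map, List.map_cons, List.cons_append,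
    List.cons_append, cycleList_cons_cons, Nat.add_zero]

lemma hookPerm_val (hq : 1 ≤ q) (hpq : 1 ≤ p ∨ q = 1) (hqk : q ≤ k) (hkp : k + p ≤ N)
    (x : Fin N) :
    (hookPerm N k p q x : ℕ) =
      if (x : ℕ) < k - q ∨ k + p ≤ x then (x : ℕ)
      else if (x : ℕ) + 1 < k then x + 1
      else if (x : ℕ) < k then x + p
      else if (x : ℕ) = k then k - q
      else x - 1 := by
  induction q, hq using Nat.le_induction with
  | base =>
    cases p with
    | zero =>
      rw [hookPerm_arm_zero, Perm.one_apply]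
      grind
    | succ p =>
      rw [hookPerm_arm_succ hqk, Perm.mul_apply,
        t_apply_val (by omega) (by omega) (by omega) (by omega),
        cycleList_reverse_range_val (by omega) hkp]
      grind
  | succ q hq ih =>
    rw [hookPerm_leg_succ hq hqk, Perm.mul_apply,
      t_apply_val (by omega) (by omega) (by omega) (by omega), ih (by omega) (by omega)]
    grind

lemma hookPerm_arm_succ_eq_mul (hk : 1 ≤ k) (hkp : k + p < N) :
    hookPerm N k (p + 1) 1 = hookPerm N k p 1 * t N k (k + p + 1) := by
  ext x
  rw [hookPerm_val le_rfl (.inr rfl) hk (by omega), Perm.mul_apply,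
    hookPerm_val le_rfl (.inr rfl) hk (by omega),
    t_apply_val (by omega) (by omega) (by omega) (by omega)]
  split_ifs <;> omega

lemma hookPerm_leg_succ_eq_mul (hp : 1 ≤ p) (hq : 1 ≤ q) (hqk : q < k) (hkp : k + p ≤ N) :
    hookPerm N k p (q + 1) = hookPerm N k p q * t N (k - q) (k + 1) := by
  ext x
  rw [hookPerm_val (by omega) (.inl hp) hqk hkp, Perm.mul_apply,
    hookPerm_val hq (.inl hp) (by omega) hkp,
    t_apply_val (by omega) (by omega) (by omega) (by omega)]
  split_ifs <;> omega

end HookPerm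

section HookWord

variable {N : ℕ} {k : ℕ}

lemma labelOp_basisVec_eq_of_unique {w : Perm (Fin N)} {a b : Fin N} (ha : (a : ℕ) < k)
    (hb : k ≤ (b : ℕ)) (hab : IsCover w a b)
    (huniq : ∀ a' : Fin N, (a' : ℕ) < k → IsCover w a' b → a' = a) :
    labelOp k (w b) (basisVec w) = basisVec (w * swap a b) := by
  rw [labelOp_basisVec, if_pos hb, Finset.sum_eq_single_of_mem a (by simpa using ha),
    coverOp_basisVec, if_pos hab]
  intro a' ha' hne
  rw [coverOp_basisVec, if_neg fun h => hne (huniq a' (by simpa using ha') h)]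

lemma labelOp_basisVec_eq_zero {w : Perm (Fin N)} {b : Fin N}
    (h : k ≤ (b : ℕ) → ∀ a : Fin N, (a : ℕ) < k → ¬IsCover w a b) :
    labelOp k (w b) (basisVec w) = 0 := by
  rw [labelOp_basisVec, ite_eq_right_iff]
  intro hb
  refine Finset.sum_eq_zero fun a ha => ?_
  rw [coverOp_basisVec, if_neg (h hb a (by simpa using ha))]

variable [NeZero N] {p q : ℕ}

lemma labelOp_hookPerm_arm (hk : 1 ≤ k) (hkp : k + p < N) {l : Fin N}
    (hl : 0 < p → k + p - 1 < (l : ℕ)) :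
    labelOp k l (basisVec (hookPerm N k p 1)) =
      if (l : ℕ) = k + p then basisVec (hookPerm N k (p + 1) 1) else 0 := by
  have hw := hookPerm_val (N := N) (p := p) le_rfl (.inr rfl) hk (by omega)
  have ha : (pos N k : ℕ) + 1 = k := pos_val_add_one hk (by omega)
  have hb : (pos N (k + p + 1) : ℕ) + 1 = k + p + 1 := pos_val_add_one (by omega) (by omega)
  rw [hookPerm_arm_succ_eq_mul hk hkp, t]
  generalize hookPerm N k p 1 = w at *
  generalize pos N k = a at *
  generalize pos N (k + p + 1) = b₀ at *
  obtain ⟨b, rfl⟩ := w.surjective l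
  have hwa : (w a : ℕ) + 1 = k + p := by rw [hw]; split_ifs <;> omega
  have hlow (c : Fin N) (hc : (c : ℕ) < k) (hca : c ≠ a) : (w c : ℕ) = c ∧ c < a := by
    have hne := Fin.val_ne_of_ne hca
    rw [hw, Fin.lt_def]
    split_ifs <;> omega
  have hhigh (c : Fin N) (hc : k ≤ (c : ℕ)) :
      if k + p ≤ (c : ℕ) then (w c : ℕ) = c else (w c : ℕ) < k + p := by
    rw [hw]
    split_ifs <;> omega
  clear hw
  split_ifs with hwb
  · obtain rfl : b = b₀ := by grind
    have hab : IsCover w a b := ⟨by grind, by grind, fun c _ _ => by grind⟩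
    refine labelOp_basisVec_eq_of_unique (by grind) (by omega) hab fun c hc hcb => ?_
    by_contra hca
    exact hcb.2.2 a (hlow c hc hca).2 hab.1 ⟨by grind, hab.2.1⟩
  · refine labelOp_basisVec_eq_zero fun hbk c hc hcb => ?_
    have hbp : (w b : ℕ) = b ∧ k + p < (b : ℕ) := by grind
    by_cases hca : c = a
    · exact hcb.2.2 b₀ (by grind) (by grind) ⟨by grind, by grind⟩
    · exact hcb.2.2 a (hlow c hc hca).2 (by grind) ⟨by grind, by grind⟩

lemma labelOp_hookPerm_leg (hp : 1 ≤ p) (hq : 1 ≤ q) (hqk : q < k) (hkp : k + p ≤ N) {l : Fin N}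
    (hl : (l : ℕ) < if q = 1 then k + p - 1 else k + 1 - q) :
    labelOp k l (basisVec (hookPerm N k p q)) =
      if (l : ℕ) = k - q then basisVec (hookPerm N k p (q + 1)) else 0 := by
  have hw := hookPerm_val (N := N) hq (.inl hp) hqk.le hkp
  have ha : (pos N (k - q) : ℕ) + 1 = k - q := pos_val_add_one (by omega) (by omega)
  have hb : (pos N (k + 1) : ℕ) + 1 = k + 1 := pos_val_add_one (by omega) (by omega)
  rw [hookPerm_leg_succ_eq_mul hp hq hqk hkp, t]
  generalize hookPerm N k p q = w at *
  generalize pos N (k - q) = a at *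
  generalize pos N (k + 1) = b₀ at *
  obtain ⟨b, rfl⟩ := w.surjective l
  have hlow (c : Fin N) (hc : (c : ℕ) < k) :
      if c ≤ a then (w c : ℕ) = c else if (c : ℕ) + 1 < k then (w c : ℕ) = c + 1
      else (w c : ℕ) + 1 = k + p := by
    simp only [hw, Fin.le_def]
    split_ifs <;> omega
  have hhigh (c : Fin N) (hc : k ≤ (c : ℕ)) :
      if c = b₀ then (w c : ℕ) = k - q else if (c : ℕ) < k + p then (w c : ℕ) + 1 = c
      else (w c : ℕ) = c := by
    simp only [hw, Fin.ext_iff]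
    split_ifs <;> omega
  have hwb₀ : (w b₀ : ℕ) = k - q := by grind
  clear hw
  split_ifs with hwb
  · obtain rfl : b = b₀ := w.injective (Fin.ext (hwb.trans hwb₀.symm))
    have hab : IsCover w a b := ⟨by grind, by grind, fun c _ _ => by grind⟩
    refine labelOp_basisVec_eq_of_unique (by grind) (by omega) hab fun c hc hcb => ?_
    by_contra hca
    exact hcb.2.2 a (by grind [IsCover]) hab.1 ⟨by grind [IsCover], hab.2.1⟩
  · refine labelOp_basisVec_eq_zero fun hbk c hc hcb => ?_
    have hbb : b₀ < b ∧ q = 1 := by grind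
    have hwcb : (w c : ℕ) < w b := hcb.2.1
    have hwc := hlow c hc
    have hwb' := hhigh b hbk
    exact hcb.2.2 b₀ (by grind) (by grind) ⟨by rw [Fin.lt_def]; grind, by grind⟩

/-- The letters, 0-indexed, of the only hook word that does not annihilate `basisVec 1`. -/
def hookLabel (k p i : ℕ) : ℕ := if i < p then k + i else k + p - 1 - i

lemma labelOp_hookPerm (hk : 1 ≤ k) (hp : 1 ≤ p) (hkp : k + p ≤ N) {m : ℕ} (hm : m + 1 < k + p)
    {l : Fin N}
    (hl : 0 < m → if m < p then hookLabel k p (m - 1) < l else (l : ℕ) < hookLabel k p (m - 1)) :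
    labelOp k l (basisVec (hookPerm N k (min m p) (m - p + 1))) =
      if (l : ℕ) = hookLabel k p m then basisVec (hookPerm N k (min (m + 1) p) (m + 1 - p + 1))
      else 0 := by
  rcases lt_or_ge m p with hmp | hmp
  · rw [min_eq_left hmp.le, min_eq_left (by omega), Nat.sub_eq_zero_of_le hmp.le,
      Nat.sub_eq_zero_of_le (by omega), labelOp_hookPerm_arm hk (by omega) (by grind [hookLabel]),
      hookLabel, if_pos hmp]
  · rw [min_eq_right hmp, min_eq_right (by omega), Nat.sub_add_comm hmp,
      labelOp_hookPerm_leg hp (by omega) (by omega) hkp (by grind [hookLabel]), hookLabel,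
      if_neg hmp.not_gt, show k - (m - p + 1) = k + p - 1 - m by omega]

lemma wordOp_labelOp_basisVec_one (hk : 1 ≤ k) (hp : 1 ≤ p) (hkp : k + p ≤ N) {m : ℕ}
    (hm : m < k + p) {L : Fin m → Fin N} (hL : IsHookWord (· < ·) p L) :
    wordOp (labelOp k) L (basisVec 1) =
      if ∀ i, (L i : ℕ) = hookLabel k p i then basisVec (hookPerm N k (min m p) (m - p + 1))
      else 0 := by
  induction m with
  | zero =>
    rw [if_pos fun i => i.elim0, wordOp_zero, Nat.zero_min, Nat.zero_sub, hookPerm_arm_zero,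
      Module.End.one_apply]
  | succ m ih =>
    rw [wordOp_succ, Module.End.mul_apply, ih (by omega) hL.castSucc]
    by_cases h : ∀ i : Fin m, (L i.castSucc : ℕ) = hookLabel k p i
    · rw [if_pos h, labelOp_hookPerm hk hp hkp hm fun hm₀ => ?_]
      · simp [Fin.forall_fin_succ', h]
      · have hlast := hL (Fin.castSucc ⟨m - 1, by omega⟩) (Fin.last m)
          (Nat.sub_add_cancel hm₀).symm
        simpa only [Fin.lt_def, h, Fin.val_last] using hlast
    · rw [if_neg h, map_zero, if_neg fun h' => h fun i => h' i.castSucc]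

lemma hookSum_labelOp_basisVec_one (hp : 1 ≤ p) (hq : 1 ≤ q) (hqk : q ≤ k) (hkp : k + p ≤ N) :
    hookSum (labelOp (N := N) k) (· < ·) (p + q - 1) p (basisVec 1) =
      basisVec (hookPerm N k p q) := by
  let L₀ (i : Fin (p + q - 1)) : Fin N := ⟨hookLabel k p i, by grind [hookLabel]⟩
  have hL₀ : IsHookWord (· < ·) p L₀ := by
    intro i j hij
    simp only [L₀, Fin.mk_lt_mk, hookLabel]
    split_ifs <;> omega
  have heval {L : Fin (p + q - 1) → Fin N} (hL : IsHookWord (· < ·) p L) :=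
    wordOp_labelOp_basisVec_one (by omega) hp hkp (by omega) hL
  rw [hookSum, LinearMap.sum_apply, Finset.sum_eq_single_of_mem L₀ (Finset.mem_univ _)]
  · rw [if_pos hL₀, heval hL₀, if_pos fun _ => rfl, min_eq_right (by omega),
      show p + q - 1 - p + 1 = q by omega]
  · intro L _ hne
    split_ifs with hL
    · rw [heval hL, if_neg fun h => hne (funext fun i => Fin.ext (h i))]
    · rfl

lemma schubertMap_hookSum (hp : 1 ≤ p) (hq : 1 ≤ q) (hqk : q ≤ k) (hkp : k + p ≤ N)
    (w : Perm (Fin N)) :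
    schubertMap (hookSum (labelOp (N := N) k) (· < ·) (p + q - 1) p (basisVec w)) =
        SS N w * SS N (hookPerm N k p q) ∧
      schubertMap (hookSum (labelOp (N := N) k) (· > ·) (p + q - 1) q (basisVec w)) =
        SS N w * SS N (hookPerm N k p q) := by
  obtain ⟨r, hlt, hgt⟩ := exists_isMulBy_hookSum (N := N) (k := k) (by omega) hp hq
  have hone : SS N 1 = 1 := by rw [SS, schubertPoly_one, map_one]
  have hr := hlt (basisVec 1)
  rw [hookSum_labelOp_basisVec_one hp hq hqk hkp, schubertMap_basisVec, schubertMap_basisVec, hone,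
    mul_one] at hr
  rw [hlt, hgt, schubertMap_basisVec, hr, mul_comm]
  exact ⟨rfl, rfl⟩

end HookWord

section Paths

variable {N k m p : ℕ} {w w' : Perm (Fin N)} {γ γ' : (ℕ → ℕ) × (ℕ → ℕ)} {a b a' b' : Fin N}

/-- The path `γ` of length `m` followed by the step `swap a b`. -/
def extendPath (m : ℕ) (γ : (ℕ → ℕ) × (ℕ → ℕ)) (a b : Fin N) : (ℕ → ℕ) × (ℕ → ℕ) :=
  (Function.update γ.1 m (a + 1), Function.update γ.2 m (b + 1))

lemma extendPath_injective (hγ : ∀ i, m ≤ i → γ.1 i = 0 ∧ γ.2 i = 0)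
    (hγ' : ∀ i, m ≤ i → γ'.1 i = 0 ∧ γ'.2 i = 0)
    (h : extendPath m γ a b = extendPath m γ' a' b') : γ = γ' ∧ a = a' ∧ b = b' := by
  simp only [extendPath, Prod.mk.injEq, funext_iff] at h
  obtain ⟨h₁, h₂⟩ := h
  refine ⟨Prod.ext (funext fun i => ?_) (funext fun i => ?_), ?_, ?_⟩
  · have := h₁ i
    grind
  · have := h₂ i
    grind
  · simpa [Fin.val_inj] using h₁ m
  · simpa [Fin.val_inj] using h₂ m

lemma labelOp_basisVec_eq_sum (k : ℕ) (l : Fin N) (w : Perm (Fin N)) :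
    labelOp k l (basisVec w) = ∑ ab : Fin N × Fin N with
      (ab.1 : ℕ) < k ∧ k ≤ (ab.2 : ℕ) ∧ IsCover w ab.1 ab.2 ∧ w ab.2 = l,
        basisVec (w * swap ab.1 ab.2) := by
  obtain ⟨b, rfl⟩ := w.surjective l
  symm
  rw [Finset.sum_filter, Fintype.sum_prod_type_right,
    Finset.sum_eq_single_of_mem b (Finset.mem_univ b) fun c _ hc => by simp [hc],
    labelOp_basisVec, Finset.sum_filter]
  split_ifs with hb
  · simp [hb, ite_and]
  · simp [hb]

variable [NeZero N]

/-- The endpoint of the path of length `m` from `w` encoded by `γ`. -/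
def pathEnd (m : ℕ) (w : Perm (Fin N)) (γ : (ℕ → ℕ) × (ℕ → ℕ)) : Perm (Fin N) :=
  w * tProd N γ.1 γ.2 m

/-- `γ` encodes a path of length `m` in the `k`-Bruhat order from `w`, normalized as in `PathWit`,
whose labels form the word `L`. The letters of `L` are 0-indexed, the labels 1-indexed. -/
def IsLabelledPath (k : ℕ) (w : Perm (Fin N)) (L : Fin m → Fin N) (γ : (ℕ → ℕ) × (ℕ → ℕ)) : Prop :=
  StepOK N k m w γ.1 γ.2 ∧ (∀ i, m ≤ i → γ.1 i = 0 ∧ γ.2 i = 0) ∧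
    ∀ i : Fin m, label w γ.1 γ.2 i = L i + 1

lemma tProd_succ (a b : ℕ → ℕ) (i : ℕ) :
    tProd N a b (i + 1) = tProd N a b i * t N (a i) (b i) := by
  simp [tProd, List.range_succ]

lemma label_eq (w : Perm (Fin N)) (a b : ℕ → ℕ) (i : ℕ) :
    label w a b i = ((w * tProd N a b i) (pos N (b i)) : ℕ) + 1 := by
  rw [label, val, tProd_succ, ← mul_assoc, Perm.mul_apply, t, swap_apply_left]

lemma tProd_extendPath_of_le {i : ℕ} (hi : i ≤ m) :
    tProd N (extendPath m γ a b).1 (extendPath m γ a b).2 i = tProd N γ.1 γ.2 i := by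
  rw [tProd, tProd]
  congr 1
  refine List.map_congr_left fun j hj => ?_
  have hjm : j ≠ m := by have := List.mem_range.1 hj; omega
  simp [extendPath, hjm]

lemma pathEnd_extendPath : pathEnd (m + 1) w (extendPath m γ a b) = pathEnd m w γ * swap a b := by
  rw [pathEnd, tProd_succ, tProd_extendPath_of_le le_rfl, ← mul_assoc]
  simp [pathEnd, extendPath, t, pos_val_succ]

lemma label_extendPath_of_lt {i : ℕ} (hi : i < m) :
    label w (extendPath m γ a b).1 (extendPath m γ a b).2 i = label w γ.1 γ.2 i := by
  rw [label, label, tProd_extendPath_of_le hi]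
  simp [extendPath, hi.ne]

lemma label_extendPath_self :
    label w (extendPath m γ a b).1 (extendPath m γ a b).2 m = (pathEnd m w γ b : ℕ) + 1 := by
  rw [label_eq, tProd_extendPath_of_le le_rfl]
  simp [pathEnd, extendPath, pos_val_succ]

lemma stepOK_extendPath :
    StepOK N k (m + 1) w (extendPath m γ a b).1 (extendPath m γ a b).2 ↔
      StepOK N k m w γ.1 γ.2 ∧ (a : ℕ) < k ∧ k ≤ (b : ℕ) ∧ IsCover (pathEnd m w γ) a b := by
  have hpos : (∀ i < m + 1, 1 ≤ (extendPath m γ a b).1 i ∧ (extendPath m γ a b).1 i ≤ k ∧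
        k < (extendPath m γ a b).2 i ∧ (extendPath m γ a b).2 i ≤ N) ↔
      (∀ i < m, 1 ≤ γ.1 i ∧ γ.1 i ≤ k ∧ k < γ.2 i ∧ γ.2 i ≤ N) ∧ (a : ℕ) < k ∧ k ≤ (b : ℕ) := by
    rw [Nat.forall_lt_succ_right]
    refine and_congr (forall₂_congr fun i hi => ?_) ?_
    · simp [extendPath, hi.ne]
    · simp only [extendPath, Function.update_self]
      omega
  have hlen : (∀ i ≤ m + 1, len (w * tProd N (extendPath m γ a b).1 (extendPath m γ a b).2 i) =
        len w + i) ↔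
      (∀ i ≤ m, len (w * tProd N γ.1 γ.2 i) = len w + i) ∧
        len (pathEnd m w γ * swap a b) = len w + (m + 1) := by
    simp_rw [← Nat.lt_succ_iff]
    rw [Nat.forall_lt_succ_right, ← pathEnd, pathEnd_extendPath]
    refine and_congr_left fun _ => forall₂_congr fun i hi => ?_
    rw [tProd_extendPath_of_le (Nat.lt_succ_iff.1 hi)]
  rw [StepOK, StepOK, hpos, hlen]
  constructor
  · rintro ⟨⟨hγ, ha, hb⟩, hl, hend⟩
    have hm : len (pathEnd m w γ) = len w + m := hl m le_rfl
    exact ⟨⟨hγ, hl⟩, ha, hb, (len_mul_swap_eq_iff (by omega)).1 (by omega)⟩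
  · rintro ⟨⟨hγ, hl⟩, ha, hb, hc⟩
    have hm : len (pathEnd m w γ) = len w + m := hl m le_rfl
    exact ⟨⟨hγ, ha, hb⟩, hl, by rw [(len_mul_swap_eq_iff hc.1).2 hc, hm, add_assoc]⟩

lemma isLabelledPath_extendPath {L : Fin (m + 1) → Fin N}
    (hγ : ∀ i, m ≤ i → γ.1 i = 0 ∧ γ.2 i = 0) :
    IsLabelledPath k w L (extendPath m γ a b) ↔
      IsLabelledPath k w (fun i => L i.castSucc) γ ∧ (a : ℕ) < k ∧ k ≤ (b : ℕ) ∧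
        IsCover (pathEnd m w γ) a b ∧ pathEnd m w γ b = L (Fin.last m) := by
  have hzero : ∀ i, m + 1 ≤ i → (extendPath m γ a b).1 i = 0 ∧ (extendPath m γ a b).2 i = 0 := by
    intro i hi
    simpa [extendPath, show i ≠ m by omega] using hγ i (by omega)
  have hlabel : (∀ i : Fin (m + 1), label w (extendPath m γ a b).1 (extendPath m γ a b).2 i =
        L i + 1) ↔
      (∀ i : Fin m, label w γ.1 γ.2 i = L i.castSucc + 1) ∧
        pathEnd m w γ b = L (Fin.last m) := by
    rw [Fin.forall_fin_succ', Fin.val_last, label_extendPath_self, add_left_inj, Fin.val_inj]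
    refine and_congr_left fun _ => forall_congr' fun i => ?_
    rw [Fin.val_castSucc, label_extendPath_of_lt i.isLt]
  rw [IsLabelledPath, IsLabelledPath, stepOK_extendPath, hlabel]
  tauto

lemma IsLabelledPath.exists_eq_extendPath {L : Fin (m + 1) → Fin N}
    (h : IsLabelledPath k w L γ) : ∃ (γ' : (ℕ → ℕ) × (ℕ → ℕ)) (a b : Fin N),
      (∀ i, m ≤ i → γ'.1 i = 0 ∧ γ'.2 i = 0) ∧ extendPath m γ' a b = γ := by
  obtain ⟨⟨hpos, -⟩, hzero, -⟩ := h
  have hm := hpos m m.lt_succ_self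
  refine ⟨(Function.update γ.1 m 0, Function.update γ.2 m 0), pos N (γ.1 m), pos N (γ.2 m),
    fun i hi => ?_, ?_⟩
  · obtain rfl | hne := eq_or_ne i m
    · simp
    · simpa [hne] using hzero i (by omega)
  · simp [extendPath, pos_val_add_one, show 1 ≤ γ.1 m by omega, show γ.1 m ≤ N by omega,
      show 1 ≤ γ.2 m by omega, show γ.2 m ≤ N by omega]

lemma isLabelledPath_zero {L : Fin 0 → Fin N} :
    IsLabelledPath k w L γ ↔ γ = (fun _ => 0, fun _ => 0) := by
  constructor
  · rintro ⟨-, h, -⟩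
    exact Prod.ext (funext fun i => (h i i.zero_le).1) (funext fun i => (h i i.zero_le).2)
  · rintro rfl
    exact ⟨⟨by simp, by simp [tProd]⟩, by simp, fun i => i.elim0⟩

lemma exists_finset_wordOp_labelOp_basisVec (k : ℕ) (w : Perm (Fin N)) (L : Fin m → Fin N) :
    ∃ F : Finset ((ℕ → ℕ) × (ℕ → ℕ)), (∀ γ, γ ∈ F ↔ IsLabelledPath k w L γ) ∧
      wordOp (labelOp k) L (basisVec w) = ∑ γ ∈ F, basisVec (pathEnd m w γ) := by
  induction m with
  | zero =>
    refine ⟨{(fun _ => 0, fun _ => 0)}, fun γ => ?_, ?_⟩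
    · rw [Finset.mem_singleton, isLabelledPath_zero]
    · simp [pathEnd, tProd]
  | succ m ih =>
    obtain ⟨F, hF, hsum⟩ := ih fun i => L i.castSucc
    set S := F.sigma fun γ => {ab : Fin N × Fin N | (ab.1 : ℕ) < k ∧ k ≤ (ab.2 : ℕ) ∧
      IsCover (pathEnd m w γ) ab.1 ab.2 ∧ pathEnd m w γ ab.2 = L (Fin.last m)} with hS
    refine ⟨S.image fun x => extendPath m x.1 x.2.1 x.2.2, fun γ => ?_, ?_⟩
    · simp only [hS, Finset.mem_image, Finset.mem_sigma, Finset.mem_filter_univ, hF]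
      constructor
      · rintro ⟨x, hx, rfl⟩
        exact (isLabelledPath_extendPath hx.1.2.1).2 hx
      · intro h
        obtain ⟨γ', a, b, hγ', rfl⟩ := h.exists_eq_extendPath
        exact ⟨⟨γ', a, b⟩, (isLabelledPath_extendPath hγ').1 h, rfl⟩
    · rw [wordOp_succ, Module.End.mul_apply, hsum, map_sum, Finset.sum_image]
      · simp_rw [labelOp_basisVec_eq_sum, pathEnd_extendPath]
        rw [hS, Finset.sum_sigma]
      · rintro ⟨γ, a, b⟩ hx ⟨γ', a', b'⟩ hx' h
        simp only [hS, Finset.coe_sigma, Set.mem_sigma_iff, Finset.mem_coe, hF] at hx hx'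
        obtain ⟨rfl, rfl, rfl⟩ := extendPath_injective hx.1.2.1 hx'.1.2.1 h
        rfl

lemma IsLabelledPath.unique {L L' : Fin m → Fin N} (h : IsLabelledPath k w L γ)
    (h' : IsLabelledPath k w L' γ) : L = L' :=
  funext fun i => Fin.ext <| Nat.succ_injective <| (h.2.2 i).symm.trans (h'.2.2 i)

lemma schubertMap_hookSum_eq_sum_ncard {r : Fin N → Fin N → Prop}
    {P : Perm (Fin N) → Set ((ℕ → ℕ) × (ℕ → ℕ))}
    (hP : ∀ w' γ, γ ∈ P w' ↔
      ∃ L : Fin m → Fin N, IsHookWord r p L ∧ IsLabelledPath k w L γ ∧ w' = pathEnd m w γ) :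
    schubertMap (hookSum (labelOp (N := N) k) r m p (basisVec w)) =
      ∑ w', (P w').ncard • SS N w' := by
  choose F hF hsum using exists_finset_wordOp_labelOp_basisVec (m := m) k w
  set G := (Finset.univ.filter fun L => IsHookWord r p L).biUnion F with hG
  have hbasis : hookSum (labelOp (N := N) k) r m p (basisVec w) =
      ∑ γ ∈ G, basisVec (pathEnd m w γ) := by
    rw [hG, Finset.sum_biUnion, hookSum, ← Finset.sum_filter, LinearMap.sum_apply]
    · exact Finset.sum_congr rfl fun L _ => hsum L
    · intro L _ L' _ hne
      refine Finset.disjoint_left.2 fun γ h h' => hne ?_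
      exact ((hF L γ).1 h).unique ((hF L' γ).1 h')
  have hcard (w' : Perm (Fin N)) :
      (P w').ncard = (G.filter fun γ => pathEnd m w γ = w').card := by
    rw [← Set.ncard_coe_finset]
    congr 1
    ext γ
    simp [hP, hG, hF, eq_comm (a := w'), and_assoc, ← exists_and_right]
  rw [hbasis, map_sum, ← Finset.sum_fiberwise G fun γ => pathEnd m w γ]
  refine Finset.sum_congr rfl fun w' _ => ?_
  rw [hcard, ← Finset.sum_const]
  refine Finset.sum_congr rfl fun γ hγ => ?_
  rw [schubertMap_basisVec, (Finset.mem_filter.1 hγ).2]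

lemma exists_isHookWord_isLabelledPath_iff (hpm : p ≤ m) {r : Fin N → Fin N → Prop} [IsTrans _ r]
    {R : ℕ → ℕ → Prop} (hr : ∀ x y : Fin N, r x y ↔ R (x + 1) (y + 1)) :
    (∃ L : Fin m → Fin N, IsHookWord r p L ∧ IsLabelledPath k w L γ ∧ w' = pathEnd m w γ) ↔
      PathWit N k m w w' γ ∧
        (∀ i j, i < j → j < p → R (label w γ.1 γ.2 i) (label w γ.1 γ.2 j)) ∧
        ∀ i j, p - 1 ≤ i → i < j → j < m → R (label w γ.1 γ.2 j) (label w γ.1 γ.2 i) := by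
  simp only [isHookWord_iff, hr]
  constructor
  · rintro ⟨L, ⟨hinc, hdec⟩, ⟨hstep, hzero, hlabel⟩, hend⟩
    refine ⟨⟨hstep, hend, hzero⟩, fun i j hij hj => ?_, fun i j hi hij hj => ?_⟩
    · simpa only [← hlabel] using hinc ⟨i, by omega⟩ ⟨j, by omega⟩ hij hj
    · simpa only [← hlabel] using hdec ⟨i, by omega⟩ ⟨j, by omega⟩ hi hij
  · rintro ⟨⟨hstep, hend, hzero⟩, hinc, hdec⟩
    refine ⟨fun i => (w * tProd N γ.1 γ.2 i) (pos N (γ.2 i)), ?_,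
      ⟨hstep, hzero, fun i => label_eq _ _ _ _⟩, hend⟩
    simp only [← label_eq]
    exact ⟨fun i j hij hj => hinc i j hij hj, fun i j hi hij => hdec i j hi hij j.isLt⟩

lemma mem_incDecPaths_iff (hpm : p ≤ m) : γ ∈ IncDecPaths N k m p w w' ↔
    ∃ L : Fin m → Fin N, IsHookWord (· < ·) p L ∧ IsLabelledPath k w L γ ∧ w' = pathEnd m w γ :=
  (exists_isHookWord_isLabelledPath_iff hpm (R := (· < ·)) (by simp)).symm

lemma mem_decIncPaths_iff (hpm : p ≤ m) : γ ∈ DecIncPaths N k m p w w' ↔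
    ∃ L : Fin m → Fin N, IsHookWord (· > ·) p L ∧ IsLabelledPath k w L γ ∧ w' = pathEnd m w γ :=
  (exists_isHookWord_isLabelledPath_iff hpm (R := (· > ·)) (by simp)).symm

end Paths

/-- Multiplication by a hook Schubert polynomial: with `m = p+q-1`,
`𝔖_w · 𝔖_{h[k;p,q]} = Σ_γ 𝔖_{end(γ)}`, the sum over all paths of length `m` in the
`k`-Bruhat order starting at `w` whose labels increase for the first `p` steps
and then decrease; and the same identity holds summing over paths whose labels
decrease for the first `q` steps and then increase.  Each sum is expressed as
`Σ_{w'} (#paths from w to w') • 𝔖_{w'}` (here the paper's `n` is `n+1`). -/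
theorem hook_formula (n k p q : ℕ) (hp : 1 ≤ p) (hq : 1 ≤ q) (hqk : q ≤ k)
    (hkp : k + p ≤ n + 1) (hk : 1 ≤ k) (w : Equiv.Perm (Fin (n + 1))) :
    (SS (n + 1) w * SS (n + 1) (hookPerm (n + 1) k p q) =
      ∑ w' : Equiv.Perm (Fin (n + 1)),
        (IncDecPaths (n + 1) k (p + q - 1) p w w').ncard • SS (n + 1) w') ∧
    (SS (n + 1) w * SS (n + 1) (hookPerm (n + 1) k p q) =
      ∑ w' : Equiv.Perm (Fin (n + 1)),
        (DecIncPaths (n + 1) k (p + q - 1) q w w').ncard • SS (n + 1) w') := by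
  obtain ⟨hinc, hdec⟩ := schubertMap_hookSum hp hq hqk hkp w
  constructor
  · rw [← hinc]
    exact schubertMap_hookSum_eq_sum_ncard fun w' γ => mem_incDecPaths_iff (by omega)
  · rw [← hdec]
    exact schubertMap_hookSum_eq_sum_ncard fun w' γ => mem_decIncPaths_iff (by omega)

end SchubertPieri
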